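/- Suppose k ∈ ℕ∖{1}, 0 < 1/n ≪ ν ≪ ε, and 0 ≤ λ ≤ 1/4. Suppose R = (ε/3, a, d_{a,k}) is a regularity instance. Let V be a vertex set of size n and let G^(k), H^(k) be k-graphs on V with |G^(k) △ H^(k)| ≤ ν·C(n,k). Suppose P = P(k−1, a) is a (1/a_1, ε, a, λ)-equitable family of partitions on V which is an (ε, d_{a,k})-partition of H^(k), and suppose Q = Q(k−1, a) is a family of partitions on V such that for every j ∈ [k−1], x̂ ∈ Â(j, j−1, a) and b ∈ [a_j], |P^(j)(x̂,b) △ Q^(j)(x̂,b)| ≤ ν·C(n,j). Then Q is a (1/a_1, ε+ν^{1/6}, a, λ+ν^{1/6})-equitable family of partitions which is an (ε+ν^{1/6}, d_{a,k})-partition of G^(k). -/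

import Mathlib

namespace HypReg

open Finset

attribute [local instance 10] Classical.propDecidable

noncomputable section

variable {V : Type*} [DecidableEq V]

/-- Representation of a 1-graph: the set of singletons of `U`. -/
def sing (U : Finset V) : Finset (Finset V) :=
  U.image fun v => ({v} : Finset V)

/-- `Kset W j i B`: the i-element subsets of `W` all of whose j-element subsets lie in `B`. -/
def Kset (W : Finset V) (j i : ℕ) (B : Finset (Finset V)) : Finset (Finset V) :=
  (W.powersetCard i).filter fun S => ∀ T ∈ S.powersetCard j, T ∈ B

/-- Clique operator which, at level 1, uses the ambient family `cr` of crossing i-sets. -/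
def KsetC (W : Finset V) (cr : Finset (Finset V)) (j i : ℕ) (B : Finset (Finset V)) :
    Finset (Finset V) :=
  if j = 1 then cr.filter fun S => ∀ v ∈ S, ({v} : Finset V) ∈ B
  else Kset W j i B

/-- `A` (a (j+1)-graph) is (ε,d)-regular with respect to the j-graph `B` (plain clique sets). -/
def RegPair (W : Finset V) (j : ℕ) (ε d : ℝ) (A B : Finset (Finset V)) : Prop :=
  ∀ Q ⊆ B, ε * ((Kset W j (j+1) B).card : ℝ) ≤ ((Kset W j (j+1) Q).card : ℝ) →
    |((A ∩ Kset W j (j+1) Q).card : ℝ) - d * ((Kset W j (j+1) Q).card : ℝ)|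
      ≤ ε * ((Kset W j (j+1) Q).card : ℝ)

/-- (ε,d)-regularity with crossing-aware clique sets. -/
def RegPairC (W : Finset V) (cr : Finset (Finset V)) (j : ℕ) (ε d : ℝ)
    (A B : Finset (Finset V)) : Prop :=
  ∀ Q ⊆ B, ε * ((KsetC W cr j (j+1) B).card : ℝ) ≤ ((KsetC W cr j (j+1) Q).card : ℝ) →
    |((A ∩ KsetC W cr j (j+1) Q).card : ℝ) - d * ((KsetC W cr j (j+1) Q).card : ℝ)|
      ≤ ε * ((KsetC W cr j (j+1) Q).card : ℝ)

/-- Relative density `d(A | B)` of the (j+1)-graph `A` w.r.t. the j-graph `B`. -/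
def dens (W : Finset V) (cr : Finset (Finset V)) (j : ℕ) (A B : Finset (Finset V)) : ℝ :=
  if (KsetC W cr j (j+1) B).card = 0 then 0
  else ((A ∩ KsetC W cr j (j+1) B).card : ℝ) / ((KsetC W cr j (j+1) B).card : ℝ)

/-- `H` is a k-graph on the vertex set `W`. -/
def IsKGraph (W : Finset V) (k : ℕ) (H : Finset (Finset V)) : Prop :=
  ∀ e ∈ H, e ⊆ W ∧ e.card = k

/-- symmetric difference of two hypergraphs -/
def sd (A B : Finset (Finset V)) : Finset (Finset V) := (A \ B) ∪ (B \ A)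

/-- A (candidate) family of partitions: the ground set, the class of each vertex and,
for each level `j ≥ 2`, the class of each crossing j-set. -/
structure PartFam (V : Type*) [DecidableEq V] where
  gnd : Finset V
  vClass : V → Finset V
  cls : ℕ → Finset V → Finset (Finset V)

namespace PartFam

variable (F : PartFam V)

/-- crossing i-sets -/
def cross (i : ℕ) : Finset (Finset V) :=
  (F.gnd.powersetCard i).filter fun S =>
    ∀ u ∈ S, ∀ v ∈ S, u ≠ v → F.vClass u ≠ F.vClass v

/-- the level-j polyad of a vertex set `J` -/
def polyad (j : ℕ) (J : Finset V) : Finset (Finset V) :=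
  if j = 1 then sing (J.sup F.vClass) else (J.powersetCard j).sup (F.cls j)

/-- the clique set `K_j(P̂^{(j-1)}(J))` of the (j−1)-polyad of a crossing j-set `J` -/
def polyCliques (j : ℕ) (J : Finset V) : Finset (Finset V) :=
  KsetC F.gnd (F.cross j) (j-1) j (F.polyad (j-1) J)

/-- `F` is a family of partitions `P(k−1, a)`. -/
def IsFamily (k : ℕ) (a : ℕ → ℕ) : Prop :=
  (∀ v ∈ F.gnd, v ∈ F.vClass v) ∧
  (∀ v ∈ F.gnd, F.vClass v ⊆ F.gnd) ∧
  (∀ u ∈ F.gnd, ∀ v ∈ F.gnd, u ∈ F.vClass v → F.vClass u = F.vClass v) ∧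
  (F.gnd.image F.vClass).card = a 1 ∧ k ≤ a 1 ∧
  ∀ j, 2 ≤ j → j ≤ k - 1 →
    (∀ J ∈ F.cross j, J ∈ F.cls j J) ∧
    (∀ J ∈ F.cross j, ∀ I ∈ F.cls j J, F.cls j I = F.cls j J) ∧
    (∀ J ∈ F.cross j, F.cls j J ⊆ F.polyCliques j J) ∧
    (∀ J ∈ F.cross j, F.polyCliques j J ⊆ F.cross j) ∧
    (∀ J ∈ F.cross j, ((F.polyCliques j J).image (F.cls j)).card = a j)

/-- the regularity condition in the definition of an equitable family of partitions:
all polyad complexes of crossing k-sets are (ε, (1/a_2, …, 1/a_{k−1}))-regular. -/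
def PolyadReg (k : ℕ) (a : ℕ → ℕ) (ε : ℝ) : Prop :=
  ∀ K ∈ F.cross k, ∀ j, 2 ≤ j → j ≤ k - 1 → ∀ J ∈ K.powersetCard j,
    RegPairC F.gnd (F.cross j) (j-1) ε (1 / (a j : ℝ)) (F.polyad j K) (F.polyad (j-1) J)

/-- `(η, ε, a, λ)`-equitable family of partitions -/
def IsEquitable (k : ℕ) (a : ℕ → ℕ) (η ε lam : ℝ) : Prop :=
  1 ≤ η * (a 1 : ℝ) ∧
  (∀ v ∈ F.gnd, |((F.vClass v).card : ℝ) - (F.gnd.card : ℝ) / (a 1 : ℝ)|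
      ≤ lam * (F.gnd.card : ℝ) / (a 1 : ℝ)) ∧
  F.PolyadReg k a ε

/-- `(η, ε, a)`-equitable family of partitions (classes of size ⌊n/a₁⌋ or ⌊n/a₁⌋+1) -/
def IsEquitableE (k : ℕ) (a : ℕ → ℕ) (η ε : ℝ) : Prop :=
  1 ≤ η * (a 1 : ℝ) ∧
  (∀ v ∈ F.gnd, (F.vClass v).card = F.gnd.card / a 1 ∨
      (F.vClass v).card = F.gnd.card / a 1 + 1) ∧
  F.PolyadReg k a ε

/-- `G` is perfectly ε-regular with respect to `F`. -/
def PerfectlyRegular (k : ℕ) (ε : ℝ) (G : Finset (Finset V)) : Prop :=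
  ∀ K ∈ F.cross k, ∃ d : ℝ, 0 ≤ d ∧
    RegPairC F.gnd (F.cross k) (k-1) ε d G (F.polyad (k-1) K)

end PartFam

/-- `a` is a T-bounded vector of length k−1. -/
def BoundedVec (k T : ℕ) (a : ℕ → ℕ) : Prop := ∀ j, 1 ≤ j → j ≤ k - 1 → a j ≤ T

/-- level-j refinement `F^{(j)} ≺ P^{(j)}` between two families of partitions -/
def RefinesAt (F P : PartFam V) (j : ℕ) : Prop :=
  if j = 1 then ∀ v ∈ F.gnd, F.vClass v ⊆ P.vClass v
  else ∀ I ∈ F.cross j,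
    (∃ J ∈ P.cross j, F.cls j I ⊆ P.cls j J) ∨ ∀ S ∈ F.cls j I, S ∉ P.cross j

/-- level-j approximate refinement `F^{(j)} ≺_ν P^{(j)}` -/
def RefinesApproxAt (F P : PartFam V) (j : ℕ) (ν : ℝ) : Prop :=
  if j = 1 then
    ∃ f : Finset V → Finset V,
      (∀ v ∈ F.gnd, f (F.vClass v) ∈ F.gnd.image P.vClass) ∧
      ∑ C ∈ F.gnd.image F.vClass, ((C \ f C).card : ℝ) ≤ ν * (F.gnd.card : ℝ)
  else
    ∃ f : Finset (Finset V) → Finset (Finset V),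
      (∀ I ∈ F.cross j,
        f (F.cls j I) ∈ ((P.cross j).image (P.cls j)) ∪ {F.cross j \ P.cross j}) ∧
      ∑ C ∈ (F.cross j).image (F.cls j), ((C \ f C).card : ℝ) ≤ ν * ((F.cross j).card : ℝ)

/-- The address space: a base set (of class indices) together with a labelling of its subsets. -/
abbrev Addr := Finset ℕ × (Finset ℕ → ℕ)

/-- `x` is an element of the address space `Â(l, j, a)`. -/
def IsAddress (l j : ℕ) (a : ℕ → ℕ) (x : Addr) : Prop :=
  x.1.card = l ∧ (∀ i ∈ x.1, 1 ≤ i ∧ i ≤ a 1) ∧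
  (∀ L : Finset ℕ, L ⊆ x.1 → 2 ≤ L.card → L.card ≤ j → 1 ≤ x.2 L ∧ x.2 L ≤ a L.card) ∧
  (∀ L : Finset ℕ, ¬(L ⊆ x.1 ∧ 2 ≤ L.card ∧ L.card ≤ j) → x.2 L = 0)

/-- restriction `ŷ ≤ x̂` of an address to the base `B`, keeping levels up to `j`. -/
def restrictA (x : Addr) (j : ℕ) (B : Finset ℕ) : Addr :=
  (B, fun L => if L ⊆ B ∧ 2 ≤ L.card ∧ L.card ≤ j then x.2 L else 0)

/-- `d` is a density function of `Â(k, k−1, a)`. -/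
def DensityFun (k : ℕ) (a : ℕ → ℕ) (d : Addr → ℝ) : Prop :=
  ∀ x : Addr, IsAddress k (k-1) a x → 0 ≤ d x ∧ d x ≤ 1

/-- A family of partitions together with an `a`-labelling. -/
structure LabFam (V : Type*) [DecidableEq V] extends PartFam V where
  vIdx : V → ℕ
  lbl : ℕ → Finset V → ℕ

namespace LabFam

variable (F : LabFam V)

/-- `F` is a family of partitions with a legitimate `a`-labelling. -/
def IsLabeled (k : ℕ) (a : ℕ → ℕ) : Prop :=
  F.toPartFam.IsFamily k a ∧
  (∀ v ∈ F.gnd, 1 ≤ F.vIdx v ∧ F.vIdx v ≤ a 1) ∧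
  (∀ u ∈ F.gnd, ∀ v ∈ F.gnd, (F.vIdx u = F.vIdx v ↔ F.vClass u = F.vClass v)) ∧
  ∀ j, 2 ≤ j → j ≤ k - 1 →
    (∀ I ∈ F.toPartFam.cross j, 1 ≤ F.lbl j I ∧ F.lbl j I ≤ a j) ∧
    (∀ I ∈ F.toPartFam.cross j, ∀ I' ∈ F.cls j I, F.lbl j I' = F.lbl j I) ∧
    (∀ I ∈ F.toPartFam.cross j, ∀ I' ∈ F.toPartFam.cross j,
      F.toPartFam.polyad (j-1) I = F.toPartFam.polyad (j-1) I' →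
      F.lbl j I = F.lbl j I' → F.cls j I = F.cls j I')

/-- the address `x̂(L)` (up to level j) of a crossing set `L` -/
def addrOf (j : ℕ) (L : Finset V) : Addr :=
  (L.image F.vIdx,
   fun M => if M ⊆ L.image F.vIdx ∧ 2 ≤ M.card ∧ M.card ≤ j
     then F.lbl M.card (L.filter fun v => F.vIdx v ∈ M) else 0)

/-- the part `P^{(j)}(x̂, b)` -/
def partAt (j : ℕ) (x : Addr) (b : ℕ) : Finset (Finset V) :=
  if j ≤ 1 then (if x.1 = {b} then sing (F.gnd.filter fun v => F.vIdx v = b) else ∅)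
  else (F.toPartFam.cross j).filter fun I => F.addrOf (j-1) I = x ∧ F.lbl j I = b

/-- the polyad `P̂^{(j)}(x̂)` -/
def polyAt (j : ℕ) (x : Addr) : Finset (Finset V) :=
  if j = 1 then sing (F.gnd.filter fun v => F.vIdx v ∈ x.1)
  else (x.1.powersetCard j).sup fun B => F.partAt j (restrictA x (j-1) B) (x.2 B)

/-- `F` is an `(ε, d)`-partition of `H`. -/
def IsDensPartition (k : ℕ) (a : ℕ → ℕ) (ε : ℝ) (d : Addr → ℝ)
    (H : Finset (Finset V)) : Prop :=
  ∀ x : Addr, IsAddress k (k-1) a x →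
    RegPairC F.gnd (F.toPartFam.cross k) (k-1) ε (d x) H (F.polyAt (k-1) x)

/-- `F` is an `(ε, a, d)`-equitable partition of `H`. -/
def IsEquitPartition (k : ℕ) (a : ℕ → ℕ) (ε : ℝ) (d : Addr → ℝ)
    (H : Finset (Finset V)) : Prop :=
  F.IsLabeled k a ∧ F.toPartFam.IsEquitableE k a (1 / (a 1 : ℝ)) ε ∧
  F.IsDensPartition k a ε d H

end LabFam

/-- An ℓ-partite complex: vertex classes and, for each level, a partite graph. -/
structure Cx (V : Type*) [DecidableEq V] (l : ℕ) where
  C : Fin l → Finset V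
  G : ℕ → Finset (Finset V)

namespace Cx

variable {l : ℕ} (X : Cx V l)

def gnd : Finset V := Finset.univ.sup X.C

/-- crossing i-sets with respect to the classes of `X` -/
def cross (i : ℕ) : Finset (Finset V) :=
  (X.gnd.powersetCard i).filter fun S => ∀ t : Fin l, (S ∩ X.C t).card ≤ 1

/-- restriction of the level-j graph to the classes indexed by `L` -/
def restr (j : ℕ) (L : Finset (Fin l)) : Finset (Finset V) :=
  if j = 1 then sing (L.sup X.C) else (X.G j).filter fun e => e ⊆ L.sup X.C

/-- `X` is a complex with levels up to `k`. -/
def IsComplex (k : ℕ) : Prop :=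
  (∀ s t : Fin l, s ≠ t → Disjoint (X.C s) (X.C t)) ∧
  (∀ j, 2 ≤ j → j ≤ k → X.G j ⊆ X.cross j) ∧
  (∀ j, 3 ≤ j → j ≤ k → X.G j ⊆ Kset X.gnd (j-1) j (X.G (j-1)))

/-- `X` is an (ε, (d_2, …, d_k))-regular complex. -/
def IsRegular (k : ℕ) (ε : ℝ) (d : ℕ → ℝ) : Prop :=
  ∀ j, 2 ≤ j → j ≤ k → ∀ L ∈ (Finset.univ : Finset (Fin l)).powersetCard j,
    RegPairC X.gnd (X.cross j) (j-1) ε (d j) (X.G j) (X.restr (j-1) L)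

/-- The restricted complex `X[L]` is (ε, (d_2, …, d_{k−1}, p))-regular. -/
def RestrRegular (k : ℕ) (ε : ℝ) (d : ℕ → ℝ) (L : Finset (Fin l)) (p : ℝ) : Prop :=
  ∀ j, 2 ≤ j → j ≤ k → ∀ L' ∈ L.powersetCard j,
    RegPairC X.gnd (X.cross j) (j-1) ε (if j = k then p else d j)
      (X.restr j L) (X.restr (j-1) L')

/-- clique set `K_i` of the level-j graph of the complex (level 1: crossing sets). -/
def KsetLvl (j i : ℕ) : Finset (Finset V) :=
  if j ≤ 1 then X.cross i else Kset X.gnd j i (X.G j)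

end Cx

/-- `eCL`, `mCL` satisfy the counting lemma of Kohayakawa–Rödl–Skokan. -/
def CountingProp (eCL : ℝ → ℝ → ℕ → ℕ → ℝ) (mCL : ℝ → ℝ → ℕ → ℕ → ℕ) : Prop :=
  ∀ γ d₀ : ℝ, 0 < γ → 0 < d₀ → ∀ k l : ℕ, 2 ≤ k → k ≤ l →
    (0 < eCL γ d₀ k l ∧ eCL γ d₀ k l ≤ 1) ∧
    ∀ (V₀ : Type) [DecidableEq V₀], ∀ (X : Cx V₀ l) (m : ℕ) (lam ε : ℝ) (d : ℕ → ℝ),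
      0 ≤ lam → lam < 1/4 → 0 < ε → ε ≤ eCL γ d₀ k l → mCL γ d₀ k l ≤ m →
      (∀ j, 2 ≤ j → j ≤ k → d₀ ≤ d j) →
      X.IsComplex k →
      (∀ i, |((X.C i).card : ℝ) - (m : ℝ)| ≤ lam * m) →
      X.IsRegular k ε d →
      |((Kset X.gnd k l (X.G k)).card : ℝ) -
        (∏ j ∈ Finset.Icc 2 k, d j ^ (l.choose j)) * ∏ i, ((X.C i).card : ℝ)|
        ≤ γ * ((∏ j ∈ Finset.Icc 2 k, d j ^ (l.choose j)) * ∏ i, ((X.C i).card : ℝ))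

/-- `eRI` is a legitimate function for defining regularity instances. -/
def GoodERI (eRI : ℕ → ℕ → ℝ) : Prop :=
  (∀ t k : ℕ, 1 ≤ t → 2 ≤ k → 0 < eRI t k ∧ eRI t k ≤ 1) ∧
  (∀ k t t' : ℕ, 1 ≤ t → t ≤ t' → eRI t' k ≤ eRI t k) ∧
  (∀ t k k' : ℕ, 2 ≤ k → k ≤ k' → eRI t k' ≤ eRI t k) ∧
  (∀ k : ℕ, Filter.Tendsto (fun t => eRI t k) Filter.atTop (nhds 0)) ∧
  ∃ (eCL : ℝ → ℝ → ℕ → ℕ → ℝ) (mCL : ℝ → ℝ → ℕ → ℕ → ℕ),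
    CountingProp eCL mCL ∧
    ∀ t k : ℕ, 1 ≤ t → 2 ≤ k →
      eRI t k < eCL (1/(t:ℝ)) (1/(t:ℝ)) (k-1) k / (4 * (t:ℝ) ^ (4^k))

/-- `max_i a_i` over `i ∈ [k−1]` -/
def maxA (k : ℕ) (a : ℕ → ℕ) : ℕ := (Finset.Icc 1 (k-1)).sup a

/-- `(ε, a, d)` is a regularity instance. -/
def RegInstance (eRI : ℕ → ℕ → ℝ) (k : ℕ) (ε : ℝ) (a : ℕ → ℕ) (d : Addr → ℝ) : Prop :=
  2 ≤ k ∧ (∀ j, 1 ≤ j → j ≤ k - 1 → 1 ≤ a j) ∧ 0 < ε ∧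
  ε ≤ eRI (maxA k a) k ∧ DensityFun k a d

section Counting

variable {W : Type} [Fintype W] [DecidableEq W]

/-- `S` spans an induced copy of `Fg` in `H` (both k-graphs). -/
def InducedCopy (Fg : Finset (Finset W)) (H : Finset (Finset V)) (k : ℕ) (S : Finset V) :
    Prop :=
  ∃ e : W → V, Function.Injective e ∧ Finset.univ.image e = S ∧
    ∀ A : Finset W, A.card = k → (A.image e ∈ H ↔ A ∈ Fg)

/-- the size of the automorphism group of `Fg` -/
def AutCount (Fg : Finset (Finset W)) : ℕ :=
  Nat.card {π : W ≃ W // ∀ A : Finset W, A.image π ∈ Fg ↔ A ∈ Fg}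

/-- the number `IC_σ(F, H)` of σ-induced copies of `Fg` in the complex `X` -/
def ICosig {l : ℕ} (X : Cx V l) (k : ℕ) (Fg : Finset (Finset W)) (σ : W ≃ Fin l) : ℕ :=
  Set.ncard {e : W → V |
    (∀ v, e v ∈ X.C (σ v)) ∧
    Finset.univ.image e ∈ X.KsetLvl (k-1) l ∧
    ∀ A : Finset W, A.card = k → (A.image e ∈ X.G k ↔ A ∈ Fg)}

/-- `IC(F, d, x̂, σ)` -/
def ICs (Fg : Finset (Finset W)) (k l : ℕ) (a : ℕ → ℕ) (d : Addr → ℝ)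
    (x : Addr) (σ : W → ℕ) : ℝ :=
  (∏ B ∈ x.1.powersetCard k,
    if ∃ A ∈ Fg, A.image σ = B then d (restrictA x (k-1) B)
    else 1 - d (restrictA x (k-1) B)) *
  ∏ j ∈ Finset.Icc 2 (k-1), ((a j : ℝ) ^ (l.choose j))⁻¹

/-- `IC(F, d, x̂)` -/
def ICa (Fg : Finset (Finset W)) (k l : ℕ) (a : ℕ → ℕ) (d : Addr → ℝ) (x : Addr) : ℝ :=
  (AutCount Fg : ℝ)⁻¹ *
    ∑ᶠ σ ∈ {σ : W → ℕ | Set.BijOn σ Set.univ ↑x.1}, ICs Fg k l a d x σ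

/-- `IC(F, d)` -/
def IC (Fg : Finset (Finset W)) (k l : ℕ) (a : ℕ → ℕ) (d : Addr → ℝ) : ℝ :=
  (((a 1).choose l : ℝ))⁻¹ * ∑ᶠ x ∈ {x : Addr | IsAddress l (k-1) a x}, ICa Fg k l a d x

end Counting

end

end HypReg

namespace HypReg

open Finset

attribute [local instance 10] Classical.propDecidable

section Structure

variable {V : Type*} [DecidableEq V]

lemma mem_sing {U S : Finset V} : S ∈ ((sing U : Finset (Finset V))) ↔ ∃ v ∈ U, S = {v} := by
  simp [sing, eq_comm]

lemma mem_KsetC_iff {W : Finset V} {cr : Finset (Finset V)} {j : ℕ} (hj : 1 ≤ j)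
    (hcr : ∀ S ∈ cr, S ⊆ W ∧ S.card = j + 1) {B : Finset (Finset V)} {S : Finset V} :
    S ∈ KsetC W cr j (j + 1) B ↔
      S ⊆ W ∧ S.card = j + 1 ∧ (∀ T ⊆ S, T.card = j → T ∈ B) ∧ (j = 1 → S ∈ cr) := by
  unfold KsetC Kset
  split_ifs with h
  · subst h
    simp only [mem_filter]
    constructor
    · rintro ⟨h1, h2⟩
      refine ⟨(hcr S h1).1, (hcr S h1).2, ?_, fun _ => h1⟩
      intro T hT hc
      obtain ⟨v, rfl⟩ := Finset.card_eq_one.mp hc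
      exact h2 v (by simpa using hT)
    · rintro ⟨_, _, h3, h4⟩
      exact ⟨h4 trivial, fun v hv => h3 _ (by simpa using hv) (by simp)⟩
  · simp only [mem_filter, mem_powersetCard]
    constructor
    · rintro ⟨⟨h1, h2⟩, h3⟩
      exact ⟨h1, h2, fun T hT hc => h3 T ⟨hT, hc⟩, fun h' => absurd h' h⟩
    · rintro ⟨h1, h2, h3, _⟩
      exact ⟨⟨h1, h2⟩, fun T hT => h3 T hT.1 hT.2⟩

/-- A subset of a set on which `f` is injective is cut out by its image. -/
lemma filter_mem_image_eq {α : Type*} {f : α → ℕ} {S T : Finset α}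
    (hS : Set.InjOn f (S : Set α))
    (hT : T ⊆ S) : S.filter (fun v => f v ∈ T.image f) = T := by
  ext v
  simp only [mem_filter, mem_image]
  constructor
  · rintro ⟨h1, u, hu, h2⟩
    rwa [← hS (hT hu) h1 h2]
  · intro h
    exact ⟨hT h, v, h, rfl⟩

/-- Every subset of the image of `S` is the image of a subset of `S` of the same size. -/
lemma exists_subset_image_eq {α : Type*} {f : α → ℕ} {S : Finset α}
    (hS : Set.InjOn f (S : Set α))
    {M : Finset ℕ} (hM : M ⊆ S.image f) : ∃ T ⊆ S, T.image f = M ∧ T.card = M.card := by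
  obtain ⟨T, hT, h⟩ := Finset.subset_image_iff.mp hM
  refine ⟨T, by simpa using hT, h, ?_⟩
  rw [← h, Finset.card_image_of_injOn (hS.mono hT)]

namespace LabFam

variable {F : LabFam V} {k : ℕ} {a : ℕ → ℕ}

lemma IsLabeled.mem_cross (hF : F.IsLabeled k a) {i : ℕ} {S : Finset V} :
    S ∈ F.toPartFam.cross i ↔
      S ⊆ F.gnd ∧ S.card = i ∧ Set.InjOn F.vIdx (S : Set V) := by
  unfold PartFam.cross
  simp only [mem_filter, mem_powersetCard, and_assoc]
  refine and_congr_right fun h1 => and_congr_right fun _ => ?_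
  constructor
  · intro h u hu v hv huv
    by_contra hne
    exact h u hu v hv hne ((hF.2.2.1 u (h1 hu) v (h1 hv)).1 huv)
  · intro h u hu v hv hne hc
    exact hne (h hu hv ((hF.2.2.1 u (h1 hu) v (h1 hv)).2 hc))

lemma IsLabeled.cross_mono (hF : F.IsLabeled k a) {i : ℕ} {S T : Finset V}
    (hS : S ∈ F.toPartFam.cross i) (hT : T ⊆ S) : T ∈ F.toPartFam.cross T.card := by
  rw [hF.mem_cross] at hS ⊢
  exact ⟨hT.trans hS.1, rfl, hS.2.2.mono (by exact_mod_cast hT)⟩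

lemma cross_subset_card (F : LabFam V) (i : ℕ) :
    ∀ S ∈ F.toPartFam.cross i, S ⊆ F.gnd ∧ S.card = i := by
  intro S hS
  unfold PartFam.cross at hS
  simp only [mem_filter, mem_powersetCard] at hS
  exact hS.1

/-- The label that an address assigns to the image of a subset. -/
lemma addrOf_snd_image {j : ℕ} {S T : Finset V} (hS : Set.InjOn F.vIdx (S : Set V))
    (hT : T ⊆ S) (h2 : 2 ≤ T.card) (hj : T.card ≤ j) :
    (F.addrOf j S).2 (T.image F.vIdx) = F.lbl T.card T := by
  have hc : (T.image F.vIdx).card = T.card :=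
    Finset.card_image_of_injOn (hS.mono (by exact_mod_cast hT))
  simp only [addrOf]
  rw [hc, if_pos ⟨Finset.image_subset_image hT, h2, hj⟩, filter_mem_image_eq hS hT]

lemma addrOf_eq_iff {j : ℕ} {S : Finset V} (hS : Set.InjOn F.vIdx (S : Set V)) {x : Addr}
    (hx : ∀ L : Finset ℕ, ¬(L ⊆ x.1 ∧ 2 ≤ L.card ∧ L.card ≤ j) → x.2 L = 0) :
    F.addrOf j S = x ↔ S.image F.vIdx = x.1 ∧
      ∀ T ⊆ S, 2 ≤ T.card → T.card ≤ j → F.lbl T.card T = x.2 (T.image F.vIdx) := by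
  constructor
  · rintro rfl
    exact ⟨rfl, fun T hT h2 hj => (addrOf_snd_image hS hT h2 hj).symm⟩
  · rintro ⟨h1, h2⟩
    refine Prod.ext h1 (funext fun M => ?_)
    by_cases hM : M ⊆ S.image F.vIdx ∧ 2 ≤ M.card ∧ M.card ≤ j
    · obtain ⟨T, hT, hTM, hc⟩ := exists_subset_image_eq hS hM.1
      rw [← hTM, addrOf_snd_image hS hT (hc ▸ hM.2.1) (hc ▸ hM.2.2),
        h2 T hT (hc ▸ hM.2.1) (hc ▸ hM.2.2)]
    · rw [hx M (by rwa [← h1])]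
      simp only [addrOf]
      rw [if_neg hM]

lemma addrOf_snd_eq_zero {j : ℕ} {S : Finset V} (L : Finset ℕ)
    (h : ¬(L ⊆ (F.addrOf j S).1 ∧ 2 ≤ L.card ∧ L.card ≤ j)) : (F.addrOf j S).2 L = 0 :=
  if_neg h

lemma IsLabeled.isAddress_addrOf (hF : F.IsLabeled k a) {i j : ℕ} {S : Finset V}
    (hS : S ∈ F.toPartFam.cross i) (hj : j ≤ k - 1) : IsAddress i j a (F.addrOf j S) := by
  have hS' := hF.mem_cross.1 hS
  refine ⟨?_, ?_, ?_, fun L hL => addrOf_snd_eq_zero L hL⟩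
  · change (S.image F.vIdx).card = i
    rw [Finset.card_image_of_injOn hS'.2.2, hS'.2.1]
  · intro b hb
    obtain ⟨v, hv, rfl⟩ := Finset.mem_image.1 (show b ∈ S.image F.vIdx from hb)
    exact hF.2.1 v (hS'.1 hv)
  · intro L hL h2 h3
    obtain ⟨T, hT, rfl, hc⟩ := exists_subset_image_eq hS'.2.2 hL
    rw [addrOf_snd_image hS'.2.2 hT (hc ▸ h2) (hc ▸ h3), ← hc]
    exact ((hF.2.2.2 T.card (hc ▸ h2) (by omega)).1 T (hF.cross_mono hS hT))

lemma mem_partAt {j : ℕ} (hj : 2 ≤ j) {x : Addr} {b : ℕ} {I : Finset V} :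
    I ∈ F.partAt j x b ↔
      I ∈ F.toPartFam.cross j ∧ F.addrOf (j - 1) I = x ∧ F.lbl j I = b := by
  unfold partAt
  rw [if_neg (by omega), mem_filter]

lemma restrictA_snd_eq_zero {x : Addr} {j : ℕ} {B : Finset ℕ} (L : Finset ℕ)
    (h : ¬(L ⊆ (restrictA x j B).1 ∧ 2 ≤ L.card ∧ L.card ≤ j)) : (restrictA x j B).2 L = 0 :=
  if_neg h

lemma restrictA_snd {x : Addr} {j : ℕ} {B L : Finset ℕ} (hL : L ⊆ B) (h2 : 2 ≤ L.card)
    (hj : L.card ≤ j) : (restrictA x j B).2 L = x.2 L :=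
  if_pos ⟨hL, h2, hj⟩

lemma IsLabeled.mem_polyAt (hF : F.IsLabeled k a) {j : ℕ} (hj : 1 ≤ j) {x : Addr}
    {I : Finset V} :
    I ∈ F.polyAt j x ↔ I ∈ F.toPartFam.cross j ∧ I.image F.vIdx ⊆ x.1 ∧
      ∀ T ⊆ I, 2 ≤ T.card → F.lbl T.card T = x.2 (T.image F.vIdx) := by
  unfold polyAt
  split_ifs with h
  · subst h
    rw [mem_sing, hF.mem_cross]
    constructor
    · rintro ⟨v, hv, rfl⟩
      simp only [mem_filter] at hv
      refine ⟨⟨by simpa using hv.1, by simp, by simp⟩, by simpa using hv.2, ?_⟩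
      intro T hT h2
      have := Finset.card_le_card hT
      simp at this
      omega
    · rintro ⟨⟨h1, h2, _⟩, h3, _⟩
      obtain ⟨v, rfl⟩ := Finset.card_eq_one.mp h2
      exact ⟨v, by simpa using ⟨h1 (by simp), h3 (by simp)⟩, rfl⟩
  · simp only [Finset.mem_sup, mem_powersetCard]
    constructor
    · rintro ⟨B, ⟨hB, hBc⟩, hI⟩
      rw [mem_partAt (by omega)] at hI
      obtain ⟨h1, h2, h3⟩ := hI
      have hinj := (hF.mem_cross.1 h1).2.2
      have hIc := (hF.mem_cross.1 h1).2.1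
      rw [addrOf_eq_iff hinj (fun L hL => restrictA_snd_eq_zero L hL)] at h2
      have hIB : I.image F.vIdx = B := h2.1
      refine ⟨h1, hIB ▸ hB, fun T hT hT2 => ?_⟩
      by_cases hTj : T.card ≤ j - 1
      · rw [h2.2 T hT hT2 hTj, restrictA_snd]
        · rw [← hIB]; exact Finset.image_subset_image hT
        · rwa [Finset.card_image_of_injOn (hinj.mono (by exact_mod_cast hT))]
        · rwa [Finset.card_image_of_injOn (hinj.mono (by exact_mod_cast hT))]
      · have : T = I := Finset.eq_of_subset_of_card_le hT (by omega)
        subst this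
        rw [hIc, h3, hIB]
    · rintro ⟨h1, h2, h3⟩
      have hinj := (hF.mem_cross.1 h1).2.2
      have hIc := (hF.mem_cross.1 h1).2.1
      refine ⟨I.image F.vIdx, ⟨h2, by rw [Finset.card_image_of_injOn hinj, hIc]⟩, ?_⟩
      rw [mem_partAt (by omega)]
      refine ⟨h1, ?_, ?_⟩
      · rw [addrOf_eq_iff hinj (fun L hL => restrictA_snd_eq_zero L hL)]
        refine ⟨rfl, fun T hT hT2 hTj => ?_⟩
        rw [h3 T hT hT2, restrictA_snd (Finset.image_subset_image hT)]
        · rwa [Finset.card_image_of_injOn (hinj.mono (by exact_mod_cast hT))]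
        · rwa [Finset.card_image_of_injOn (hinj.mono (by exact_mod_cast hT))]
      · have := h3 I (subset_refl _) (by omega)
        rwa [hIc] at this

/-- The cliques of the polyad at an address `x` are the crossing sets whose address is `x`. -/
lemma IsLabeled.mem_cliques_polyAt (hF : F.IsLabeled k a) {j : ℕ} (hj : 1 ≤ j) {x : Addr}
    (hx : x.1.card = j + 1)
    (hx0 : ∀ L : Finset ℕ, ¬(L ⊆ x.1 ∧ 2 ≤ L.card ∧ L.card ≤ j) → x.2 L = 0)
    {S : Finset V} :
    S ∈ KsetC F.gnd (F.toPartFam.cross (j + 1)) j (j + 1) (F.polyAt j x) ↔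
      S ∈ F.toPartFam.cross (j + 1) ∧ F.addrOf j S = x := by
  rw [mem_KsetC_iff hj (F.cross_subset_card _)]
  constructor
  · rintro ⟨h1, h2, h3, h4⟩
    have hcr : S ∈ F.toPartFam.cross (j + 1) := by
      by_cases hj1 : j = 1
      · exact h4 hj1
      · rw [hF.mem_cross]
        refine ⟨h1, h2, fun u hu v hv huv => ?_⟩
        obtain ⟨T, hT1, hT2, hT3⟩ := Finset.exists_subsuperset_card_eq
          (s := {u, v}) (t := S) (n := j)
          (by intro w hw; simp at hw; rcases hw with rfl | rfl <;> assumption)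
          (Finset.card_le_two.trans (by omega)) (by omega)
        have hT := (hF.mem_cross.1 ((hF.mem_polyAt hj).1 (h3 T hT2 hT3)).1).2.2
        exact hT (hT1 (by simp)) (hT1 (by simp)) huv
    refine ⟨hcr, ?_⟩
    have hinj := (hF.mem_cross.1 hcr).2.2
    rw [addrOf_eq_iff hinj hx0]
    constructor
    · refine Finset.eq_of_subset_of_card_le ?_ ?_
      · intro b hb
        obtain ⟨v, hv, rfl⟩ := Finset.mem_image.1 hb
        obtain ⟨T, hT1, hT2, hT3⟩ := Finset.exists_subsuperset_card_eq
          (s := {v}) (t := S) (n := j) (by simpa using hv) (by simpa using hj) (by omega)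
        exact ((hF.mem_polyAt hj).1 (h3 T hT2 hT3)).2.1
          (Finset.mem_image_of_mem _ (hT1 (by simp)))
      · rw [Finset.card_image_of_injOn hinj, hx, h2]
    · intro T hT hT2 hTj
      obtain ⟨T', hT1, hT2', hT3⟩ := Finset.exists_subsuperset_card_eq
          (s := T) (t := S) (n := j) hT hTj (by omega)
      exact ((hF.mem_polyAt hj).1 (h3 T' hT2' hT3)).2.2 T hT1 hT2
  · rintro ⟨hcr, h⟩
    obtain ⟨h1, h2, hinj⟩ := hF.mem_cross.1 hcr
    rw [addrOf_eq_iff hinj hx0] at h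
    refine ⟨h1, h2, fun T hT hTc => ?_, fun _ => hcr⟩
    rw [hF.mem_polyAt hj]
    refine ⟨hTc ▸ hF.cross_mono hcr hT, ?_, fun T' hT' h2 => ?_⟩
    · rw [← h.1]; exact Finset.image_subset_image hT
    · exact h.2 T' (hT'.trans hT) h2 (hTc ▸ Finset.card_le_card hT')

lemma IsLabeled.vClass_eq (hF : F.IsLabeled k a) {v : V} (hv : v ∈ F.gnd) :
    F.vClass v = F.gnd.filter (fun u => F.vIdx u = F.vIdx v) := by
  ext u
  simp only [mem_filter]
  constructor
  · intro hu
    have hug := hF.1.2.1 v hv hu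
    exact ⟨hug, (hF.2.2.1 u hug v hv).2 (hF.1.2.2.1 u hug v hv hu)⟩
  · rintro ⟨hug, h⟩
    rw [← (hF.2.2.1 u hug v hv).1 h]
    exact hF.1.1 u hug

lemma IsLabeled.cls_eq_partAt_of (hF : F.IsLabeled k a) {j : ℕ} (hj : 1 ≤ j) (hjk : j + 1 ≤ k - 1)
    (hpoly : ∀ i, ∀ K ∈ F.toPartFam.cross i, F.toPartFam.polyad j K = F.polyAt j (F.addrOf j K))
    {T : Finset V} (hT : T ∈ F.toPartFam.cross (j + 1)) :
    F.cls (j + 1) T = F.partAt (j + 1) (F.addrOf j T) (F.lbl (j + 1) T) := by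
  obtain ⟨hc1, hc2, hc3, hc4, -⟩ := hF.1.2.2.2.2.2 (j + 1) (by omega) hjk
  obtain ⟨-, hl2, hl3⟩ := hF.2.2.2 (j + 1) (by omega) hjk
  simp only [Nat.add_sub_cancel] at hl3
  have hadr := hF.isAddress_addrOf hT (j := j) (by omega)
  ext I
  rw [mem_partAt (by omega), Nat.add_sub_cancel]
  constructor
  · intro hI
    have h1 := hc3 T hT hI
    unfold PartFam.polyCliques at h1
    rw [Nat.add_sub_cancel, hpoly _ T hT,
      hF.mem_cliques_polyAt hj hadr.1 hadr.2.2.2] at h1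
    exact ⟨h1.1, h1.2, hl2 T hT I hI⟩
  · rintro ⟨h1, h2, h3⟩
    rw [← hl3 I h1 T hT (by rw [hpoly _ I h1, hpoly _ T hT, h2]) h3]
    exact hc1 I h1

lemma IsLabeled.polyad_eq (hF : F.IsLabeled k a) {j : ℕ} (hj : 1 ≤ j) (hjk : j ≤ k - 1) :
    ∀ i, ∀ K ∈ F.toPartFam.cross i, F.toPartFam.polyad j K = F.polyAt j (F.addrOf j K) := by
  induction j, hj using Nat.le_induction with
  | base =>
    intro i K hK
    have hK' := hF.mem_cross.1 hK
    unfold PartFam.polyad polyAt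
    rw [if_pos rfl, if_pos rfl]
    congr 1
    ext v
    simp only [Finset.mem_sup, mem_filter, addrOf, mem_image]
    constructor
    · rintro ⟨u, hu, hv⟩
      rw [hF.vClass_eq (hK'.1 hu), mem_filter] at hv
      exact ⟨hv.1, u, hu, hv.2.symm⟩
    · rintro ⟨hv, u, hu, h⟩
      refine ⟨u, hu, ?_⟩
      rw [hF.vClass_eq (hK'.1 hu), mem_filter]
      exact ⟨hv, h.symm⟩
  | succ j hj ih =>
    intro i K hK
    have hinjK := (hF.mem_cross.1 hK).2.2
    have ih' := ih (by omega)
    ext I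
    rw [hF.mem_polyAt (by omega)]
    unfold PartFam.polyad
    rw [if_neg (by omega)]
    simp only [Finset.mem_sup, mem_powersetCard]
    constructor
    · rintro ⟨T, ⟨hT, hTc⟩, hI⟩
      have hTcr : T ∈ F.toPartFam.cross (j + 1) := hTc ▸ hF.cross_mono hK hT
      have hinjT := (hF.mem_cross.1 hTcr).2.2
      rw [hF.cls_eq_partAt_of hj hjk ih' hTcr, mem_partAt (by omega), Nat.add_sub_cancel] at hI
      obtain ⟨h1, h2, h3⟩ := hI
      obtain ⟨-, hIc, hinjI⟩ := hF.mem_cross.1 h1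
      have himg : I.image F.vIdx = T.image F.vIdx := congrArg Prod.fst h2
      refine ⟨h1, ?_, fun T' hT' hT2 => ?_⟩
      · rw [himg]; exact Finset.image_subset_image hT
      · by_cases hTj : T'.card ≤ j
        · obtain ⟨T'', hs, hi, hc⟩ := exists_subset_image_eq hinjT
            (M := T'.image F.vIdx) (himg ▸ Finset.image_subset_image hT')
          have hc' : T''.card = T'.card := by
            rw [hc, Finset.card_image_of_injOn (hinjI.mono (by exact_mod_cast hT'))]
          rw [← addrOf_snd_image hinjI hT' hT2 hTj, h2, ← hi,
            addrOf_snd_image hinjT hs (by omega) (by omega),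
            addrOf_snd_image hinjK (hs.trans hT) (by omega) (by omega)]
        · have hle := Finset.card_le_card hT'
          have : T' = I := Finset.eq_of_subset_of_card_le hT' (by omega)
          subst this
          rw [himg, addrOf_snd_image hinjK hT (by omega) (by omega), hIc, h3, hTc]
    · rintro ⟨h1, h2, h3⟩
      obtain ⟨-, hIc, hinjI⟩ := hF.mem_cross.1 h1
      obtain ⟨T, hT, himg, hTc⟩ := exists_subset_image_eq hinjK (M := I.image F.vIdx) h2
      rw [Finset.card_image_of_injOn hinjI, hIc] at hTc
      refine ⟨T, ⟨hT, hTc⟩, ?_⟩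
      have hTcr : T ∈ F.toPartFam.cross (j + 1) := hTc ▸ hF.cross_mono hK hT
      have hinjT := (hF.mem_cross.1 hTcr).2.2
      rw [hF.cls_eq_partAt_of hj hjk ih' hTcr, mem_partAt (by omega), Nat.add_sub_cancel]
      refine ⟨h1, ?_, ?_⟩
      · rw [addrOf_eq_iff hinjI (fun L hL => addrOf_snd_eq_zero L hL)]
        refine ⟨himg.symm, fun T' hT' hT2 hTj => ?_⟩
        rw [h3 T' hT' hT2]
        obtain ⟨T'', hs, hi, hc⟩ := exists_subset_image_eq hinjT
            (M := T'.image F.vIdx) (himg ▸ Finset.image_subset_image hT')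
        have hc' : T''.card = T'.card := by
          rw [hc, Finset.card_image_of_injOn (hinjI.mono (by exact_mod_cast hT'))]
        rw [← hi, addrOf_snd_image hinjT hs (by omega) (by omega),
            addrOf_snd_image hinjK (hs.trans hT) (by omega) (by omega)]
      · have := h3 I (subset_refl _) (by omega)
        rw [hIc, ← himg, addrOf_snd_image hinjK hT (by omega) (by omega), hTc] at this
        exact this

lemma IsLabeled.cls_eq_partAt (hF : F.IsLabeled k a) {j : ℕ} (hj : 1 ≤ j) (hjk : j + 1 ≤ k - 1)
    {T : Finset V} (hT : T ∈ F.toPartFam.cross (j + 1)) :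
    F.cls (j + 1) T = F.partAt (j + 1) (F.addrOf j T) (F.lbl (j + 1) T) :=
  hF.cls_eq_partAt_of hj hjk (hF.polyad_eq hj (by omega)) hT

end LabFam

end Structure

section Labels

variable {V : Type*} [DecidableEq V]

lemma card_image_le_card_image {α β : Type*} [DecidableEq β] {s : Finset α} {f : α → ℕ}
    {g : α → β} (h : ∀ u ∈ s, ∀ v ∈ s, f u = f v → g u = g v) :
    (s.image g).card ≤ (s.image f).card := by
  have hch : ∀ z : β, ∃ y : ℕ, z ∈ s.image g → ∃ v ∈ s, g v = z ∧ f v = y := by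
    intro z
    by_cases hz : z ∈ s.image g
    · obtain ⟨v, hv, h1⟩ := Finset.mem_image.1 hz
      exact ⟨f v, fun _ => ⟨v, hv, h1, rfl⟩⟩
    · exact ⟨0, fun h' => absurd h' hz⟩
  choose φ hφ using hch
  refine Finset.card_le_card_of_injOn φ ?_ ?_
  · intro z hz
    obtain ⟨v, hv, -, h2⟩ := hφ z hz
    exact Finset.mem_coe.2 (Finset.mem_image.2 ⟨v, hv, h2⟩)
  · intro z hz z' hz' hzz
    obtain ⟨v, hv, h1, h2⟩ := hφ z hz
    obtain ⟨v', hv', h1', h2'⟩ := hφ z' hz'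
    rw [← h1, ← h1', h v hv v' hv' (by rw [h2, h2', hzz])]

lemma exists_eq_of_card_image {α β : Type*} [DecidableEq β] {s : Finset α} {f : α → ℕ}
    {g : α → β} {m : ℕ} (h : ∀ u ∈ s, ∀ v ∈ s, f u = f v → g u = g v)
    (hg : (s.image g).card = m) (hf : ∀ u ∈ s, 1 ≤ f u ∧ f u ≤ m) {b : ℕ} (hb : 1 ≤ b)
    (hbm : b ≤ m) : ∃ v ∈ s, f v = b := by
  have h1 : s.image f ⊆ Finset.Icc 1 m := by
    intro y hy
    obtain ⟨v, hv, rfl⟩ := Finset.mem_image.1 hy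
    exact Finset.mem_Icc.2 (hf v hv)
  have h2 : s.image f = Finset.Icc 1 m := by
    refine Finset.eq_of_subset_of_card_le h1 ?_
    rw [Nat.card_Icc, Nat.add_sub_cancel, ← hg]
    exact card_image_le_card_image h
  have : b ∈ s.image f := by rw [h2, Finset.mem_Icc]; exact ⟨hb, hbm⟩
  exact Finset.mem_image.1 this

lemma KsetC_mono {W : Finset V} {cr : Finset (Finset V)} {j : ℕ} (hj : 1 ≤ j)
    (hcr : ∀ S ∈ cr, S ⊆ W ∧ S.card = j + 1) {B B' : Finset (Finset V)} (h : B ⊆ B') :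
    KsetC W cr j (j + 1) B ⊆ KsetC W cr j (j + 1) B' := by
  intro S hS
  rw [mem_KsetC_iff hj hcr] at hS ⊢
  exact ⟨hS.1, hS.2.1, fun T hT hc => h (hS.2.2.1 T hT hc), hS.2.2.2⟩

lemma RegPairC.congr {W : Finset V} {cr : Finset (Finset V)} {j : ℕ} (hj : 1 ≤ j)
    (hcr : ∀ S ∈ cr, S ⊆ W ∧ S.card = j + 1) {A A' B : Finset (Finset V)} {ε d : ℝ}
    (h : ∀ S ∈ KsetC W cr j (j + 1) B, S ∈ A ↔ S ∈ A') (hr : RegPairC W cr j ε d A B) :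
    RegPairC W cr j ε d A' B := by
  intro Q hQ hε
  have : A' ∩ KsetC W cr j (j + 1) Q = A ∩ KsetC W cr j (j + 1) Q := by
    ext S
    simp only [mem_inter]
    exact ⟨fun hS => ⟨(h S (KsetC_mono hj hcr hQ hS.2)).2 hS.1, hS.2⟩,
      fun hS => ⟨(h S (KsetC_mono hj hcr hQ hS.2)).1 hS.1, hS.2⟩⟩
  rw [this]
  exact hr Q hQ hε

namespace LabFam

variable {F : LabFam V} {k : ℕ} {a : ℕ → ℕ}

lemma IsLabeled.exists_vIdx_eq (hF : F.IsLabeled k a) {b : ℕ} (hb : 1 ≤ b) (hba : b ≤ a 1) :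
    ∃ v ∈ F.gnd, F.vIdx v = b :=
  exists_eq_of_card_image (g := F.vClass)
    (fun u hu v hv h => (hF.2.2.1 u hu v hv).1 h) hF.1.2.2.2.1 hF.2.1 hb hba

/-- Every crossing set extends to a crossing `k`-set. -/
lemma IsLabeled.exists_cross_superset (hF : F.IsLabeled k a) {i : ℕ} (hi : i ≤ k)
    {J : Finset V} (hJ : J ∈ F.toPartFam.cross i) : ∃ K ∈ F.toPartFam.cross k, J ⊆ K := by
  rcases hi.eq_or_lt with rfl | hlt
  · exact ⟨J, hJ, subset_rfl⟩
  obtain ⟨v₀, -⟩ := hF.exists_vIdx_eq le_rfl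
    (show 1 ≤ a 1 from le_trans (by omega) hF.1.2.2.2.2.1)
  have : Nonempty V := ⟨v₀⟩
  obtain ⟨hJ1, hJ2, hJ3⟩ := hF.mem_cross.1 hJ
  have hM : J.image F.vIdx ⊆ Finset.Icc 1 (a 1) := by
    intro b hb
    obtain ⟨v, hv, rfl⟩ := Finset.mem_image.1 hb
    exact Finset.mem_Icc.2 (hF.2.1 v (hJ1 hv))
  have hMc : (J.image F.vIdx).card = i := by rw [Finset.card_image_of_injOn hJ3, hJ2]
  obtain ⟨M, hM1, hM2, hM3⟩ := Finset.exists_subsuperset_card_eq hM (hMc.le.trans hi)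
    (by simpa using hF.1.2.2.2.2.1)
  have hrep : ∀ b ∈ M \ J.image F.vIdx, ∃ v ∈ F.gnd, F.vIdx v = b := fun b hb => by
    have := Finset.mem_Icc.1 (hM2 (Finset.mem_sdiff.1 hb).1)
    exact hF.exists_vIdx_eq this.1 this.2
  choose! f hf1 hf2 using hrep
  have hinjU : Set.InjOn F.vIdx ((J ∪ (M \ J.image F.vIdx).image f : Finset V) : Set V) := by
    intro u hu v hv huv
    simp only [coe_union, coe_image, Set.mem_union, mem_coe, Set.mem_image] at hu hv
    rcases hu with hu | ⟨b, hb, rfl⟩ <;> rcases hv with hv | ⟨c, hc, rfl⟩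
    · exact hJ3 hu hv huv
    · rw [hf2 c hc] at huv
      exact absurd (Finset.mem_image.2 ⟨u, hu, huv⟩) (Finset.mem_sdiff.1 hc).2
    · rw [hf2 b hb] at huv
      exact absurd (Finset.mem_image.2 ⟨v, hv, huv.symm⟩) (Finset.mem_sdiff.1 hb).2
    · rw [hf2 b hb, hf2 c hc] at huv
      rw [huv]
  have himg : (J ∪ (M \ J.image F.vIdx).image f).image F.vIdx = M := by
    rw [Finset.image_union, Finset.image_image]
    have : (M \ J.image F.vIdx).image (F.vIdx ∘ f) = M \ J.image F.vIdx := by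
      ext b
      simp only [Finset.mem_image, Function.comp]
      constructor
      · rintro ⟨c, hc, rfl⟩
        rwa [hf2 c hc]
      · intro hb
        exact ⟨b, hb, hf2 b hb⟩
    rw [this, Finset.union_sdiff_of_subset hM1]
  refine ⟨J ∪ (M \ J.image F.vIdx).image f, ?_, Finset.subset_union_left⟩
  rw [hF.mem_cross]
  refine ⟨Finset.union_subset hJ1 ?_, ?_, hinjU⟩
  · intro v hv
    obtain ⟨b, hb, rfl⟩ := Finset.mem_image.1 hv
    exact hf1 b hb
  · rw [← Finset.card_image_of_injOn hinjU, himg, hM3]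

/-- Every label occurs inside the polyad of a crossing set. -/
lemma IsLabeled.exists_lbl_eq (hF : F.IsLabeled k a) {j : ℕ} (hj : 1 ≤ j) (hjk : j + 1 ≤ k - 1)
    {J : Finset V} (hJ : J ∈ F.toPartFam.cross (j + 1)) {b : ℕ} (hb : 1 ≤ b)
    (hba : b ≤ a (j + 1)) :
    ∃ J' ∈ F.toPartFam.cross (j + 1), F.addrOf j J' = F.addrOf j J ∧ F.lbl (j + 1) J' = b := by
  obtain ⟨hc1, hc2, hc3, hc4, hc5⟩ := hF.1.2.2.2.2.2 (j + 1) (by omega) hjk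
  obtain ⟨hl1, hl2, hl3⟩ := hF.2.2.2 (j + 1) (by omega) hjk
  simp only [Nat.add_sub_cancel] at hl3
  have hadr := hF.isAddress_addrOf hJ (j := j) (by omega)
  have hpoly := hF.polyad_eq hj (by omega)
  have hmem : ∀ u ∈ F.toPartFam.polyCliques (j + 1) J,
      u ∈ F.toPartFam.cross (j + 1) ∧ F.addrOf j u = F.addrOf j J := by
    intro u hu
    unfold PartFam.polyCliques at hu
    rwa [Nat.add_sub_cancel, hpoly _ J hJ,
      hF.mem_cliques_polyAt hj hadr.1 hadr.2.2.2] at hu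
  obtain ⟨J', hJ', hlb⟩ := exists_eq_of_card_image (s := F.toPartFam.polyCliques (j + 1) J)
    (f := F.lbl (j + 1)) (g := F.cls (j + 1)) (m := a (j + 1))
    (fun u hu v hv huv => hl3 u (hmem u hu).1 v (hmem v hv).1
      (by rw [hpoly _ u (hmem u hu).1, hpoly _ v (hmem v hv).1, (hmem u hu).2, (hmem v hv).2])
      huv) (hc5 J hJ) (fun u hu => hl1 u (hmem u hu).1) hb hba
  exact ⟨J', (hmem J' hJ').1, (hmem J' hJ').2, hlb⟩

/-- Among the cliques of the polyad of `J ⊆ K`, the polyad of `K` and the part of `J` agree. -/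
lemma IsLabeled.mem_polyad_iff_mem_partAt (hF : F.IsLabeled k a) {j : ℕ} (hj : 1 ≤ j)
    (hjk : j + 1 ≤ k - 1) {K J : Finset V} (hK : K ∈ F.toPartFam.cross k) (hJK : J ⊆ K)
    (hJ : J.card = j + 1) {S : Finset V}
    (hS : S ∈ KsetC F.gnd (F.toPartFam.cross (j + 1)) j (j + 1) (F.polyAt j (F.addrOf j J))) :
    S ∈ F.toPartFam.polyad (j + 1) K ↔
      S ∈ F.partAt (j + 1) (F.addrOf j J) (F.lbl (j + 1) J) := by
  have hJcr : J ∈ F.toPartFam.cross (j + 1) := hJ ▸ hF.cross_mono hK hJK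
  have hadr := hF.isAddress_addrOf hJcr (j := j) (by omega)
  rw [hF.mem_cliques_polyAt hj hadr.1 hadr.2.2.2] at hS
  have hinjK := (hF.mem_cross.1 hK).2.2
  unfold PartFam.polyad
  rw [if_neg (by omega)]
  simp only [Finset.mem_sup, mem_powersetCard]
  constructor
  · rintro ⟨T, ⟨hT, hTc⟩, hI⟩
    have hTcr : T ∈ F.toPartFam.cross (j + 1) := hTc ▸ hF.cross_mono hK hT
    rw [hF.cls_eq_partAt hj hjk hTcr] at hI
    have hST := ((mem_partAt (by omega)).1 hI).2.1
    rw [Nat.add_sub_cancel] at hST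
    have himg : T.image F.vIdx = J.image F.vIdx := congrArg Prod.fst (hST.symm.trans hS.2)
    have hTJ : T = J := by
      rw [← filter_mem_image_eq hinjK hT, ← filter_mem_image_eq hinjK hJK, himg]
    rwa [hTJ] at hI
  · intro h
    refine ⟨J, ⟨hJK, hJ⟩, ?_⟩
    rwa [hF.cls_eq_partAt hj hjk hJcr]

lemma IsLabeled.regPairC_partAt (hF : F.IsLabeled k a) {ε : ℝ}
    (hR : F.toPartFam.PolyadReg k a ε) {j : ℕ} (hj : 1 ≤ j)
    (hjk : j + 1 ≤ k - 1) {J : Finset V} (hJ : J ∈ F.toPartFam.cross (j + 1)) {b : ℕ}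
    (hb : 1 ≤ b) (hba : b ≤ a (j + 1)) :
    RegPairC F.gnd (F.toPartFam.cross (j + 1)) j ε (1 / (a (j + 1) : ℝ))
      (F.partAt (j + 1) (F.addrOf j J) b) (F.polyAt j (F.addrOf j J)) := by
  obtain ⟨J', hJ', hadr, rfl⟩ := hF.exists_lbl_eq hj hjk hJ hb hba
  obtain ⟨K, hK, hJK⟩ := hF.exists_cross_superset (by omega) hJ'
  have hc := (hF.mem_cross.1 hJ').2.1
  have h := hR K hK (j + 1) (by omega) hjk J' (Finset.mem_powersetCard.2 ⟨hJK, hc⟩)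
  rw [Nat.add_sub_cancel, hF.polyad_eq hj (by omega) _ J' hJ'] at h
  rw [← hadr]
  exact RegPairC.congr hj (F.cross_subset_card _)
    (fun S hS => hF.mem_polyad_iff_mem_partAt hj hjk hK hJK hc hS) h

lemma IsLabeled.polyadReg_of_partAt (hF : F.IsLabeled k a) {ε : ℝ}
    (h : ∀ j, 1 ≤ j → j + 1 ≤ k - 1 → ∀ x : Addr, IsAddress (j + 1) j a x →
      ∀ b, 1 ≤ b → b ≤ a (j + 1) →
      RegPairC F.gnd (F.toPartFam.cross (j + 1)) j ε (1 / (a (j + 1) : ℝ))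
        (F.partAt (j + 1) x b) (F.polyAt j x)) :
    F.toPartFam.PolyadReg k a ε := by
  intro K hK i hi hik J hJ
  obtain ⟨j, rfl⟩ : ∃ j, i = j + 1 := ⟨i - 1, by omega⟩
  obtain ⟨hJK, hc⟩ := Finset.mem_powersetCard.1 hJ
  have hJcr : J ∈ F.toPartFam.cross (j + 1) := hc ▸ hF.cross_mono hK hJK
  have hl := (hF.2.2.2 (j + 1) hi hik).1 J hJcr
  rw [Nat.add_sub_cancel, hF.polyad_eq (by omega) (by omega) _ J hJcr]
  exact RegPairC.congr (by omega) (F.cross_subset_card _)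
    (fun S hS => (hF.mem_polyad_iff_mem_partAt (by omega) hik hK hJK hc hS).symm)
    (h j (by omega) hik _ (hF.isAddress_addrOf hJcr (by omega)) _ hl.1 hl.2)

end LabFam

end Labels

section Perturb

variable {V : Type*} [DecidableEq V]

lemma card_image_insert_le (D : Finset (Finset V)) (W : Finset V) :
    ((D ×ˢ W).image fun p => insert p.2 p.1).card ≤ D.card * W.card :=
  Finset.card_image_le.trans (Finset.card_product _ _).le

lemma RegPairC.perturb {W : Finset V} {cr cr' : Finset (Finset V)} {j : ℕ} (hj : 1 ≤ j)
    (hcr : ∀ S ∈ cr, S ⊆ W ∧ S.card = j + 1) (hcr' : ∀ S ∈ cr', S ⊆ W ∧ S.card = j + 1)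
    {A A' B B' D : Finset (Finset V)} {ε δ d e f : ℝ}
    (hr : RegPairC W cr j ε d A B)
    (hBD : ∀ T, T ∉ D → (T ∈ B ↔ T ∈ B'))
    (hcrD : j = 1 → ∀ S ⊆ W, (∀ T ⊆ S, T.card = j → T ∉ D ∧ T ∈ B) → (S ∈ cr ↔ S ∈ cr'))
    (hDe : (D.card : ℝ) * (W.card : ℝ) ≤ e) (hAf : ((sd A A').card : ℝ) ≤ f)
    (hε : 0 ≤ ε) (hε3 : ε ≤ 3) (hδ : 0 ≤ δ) (hδ1 : δ ≤ 1) (hd : 0 ≤ d) (hd1 : d ≤ 1)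
    (h1 : 5 * e ≤ δ * ((KsetC W cr j (j + 1) B).card : ℝ))
    (h2 : 5 * e + f ≤ δ * (ε * ((KsetC W cr j (j + 1) B).card : ℝ))) :
    RegPairC W cr' j (ε + δ) d A' B' := by
  intro Q hQ hle
  set dirty := (D ×ˢ W).image fun p => insert p.2 p.1 with hdirty
  have hdc : (dirty.card : ℝ) ≤ e := by
    refine le_trans ?_ hDe
    exact_mod_cast card_image_insert_le D W
  have hclean : ∀ S, S ⊆ W → S.card = j + 1 → S ∉ dirty → ∀ T ⊆ S, T.card = j → T ∉ D := by
    intro S hSW hSc hS T hT hTc hTD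
    apply hS
    obtain ⟨v, hv⟩ : (S \ T).Nonempty := by
      rw [← Finset.card_pos, Finset.card_sdiff_of_subset hT]; omega
    rw [Finset.mem_sdiff] at hv
    refine Finset.mem_image.2 ⟨(T, v), Finset.mem_product.2 ⟨hTD, hSW hv.1⟩, ?_⟩
    refine Finset.eq_of_subset_of_card_le (Finset.insert_subset hv.1 hT) ?_
    rw [Finset.card_insert_of_notMem hv.2]; omega
  have key : ∀ S, S ∉ dirty → ∀ R ⊆ B',
      (S ∈ KsetC W cr' j (j + 1) R ↔ S ∈ KsetC W cr j (j + 1) (R ∩ B)) := by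
    intro S hS R hR
    rw [mem_KsetC_iff hj hcr', mem_KsetC_iff hj hcr]
    refine and_congr_right fun hSW => and_congr_right fun hSc => ?_
    have hcl := hclean S hSW hSc hS
    constructor
    · rintro ⟨h3, h4⟩
      have h5 : ∀ T ⊆ S, T.card = j → T ∈ B := fun T hT hTc =>
        (hBD T (hcl T hT hTc)).2 (hR (h3 T hT hTc))
      exact ⟨fun T hT hTc => Finset.mem_inter.2 ⟨h3 T hT hTc, h5 T hT hTc⟩,
        fun hj1 => (hcrD hj1 S hSW fun T hT hTc => ⟨hcl T hT hTc, h5 T hT hTc⟩).2 (h4 hj1)⟩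
    · rintro ⟨h3, h4⟩
      exact ⟨fun T hT hTc => (Finset.mem_inter.1 (h3 T hT hTc)).1,
        fun hj1 => (hcrD hj1 S hSW fun T hT hTc =>
          ⟨hcl T hT hTc, (Finset.mem_inter.1 (h3 T hT hTc)).2⟩).1 (h4 hj1)⟩
  have hB : ∀ S ∈ KsetC W cr j (j + 1) B, S ∉ dirty → S ∈ KsetC W cr' j (j + 1) B' := by
    intro S hS hSd
    rw [key S hSd B' subset_rfl]
    rw [mem_KsetC_iff hj hcr] at hS ⊢
    exact ⟨hS.1, hS.2.1, fun T hT hTc => Finset.mem_inter.2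
      ⟨(hBD T (hclean S hS.1 hS.2.1 hSd T hT hTc)).1 (hS.2.2.1 T hT hTc),
        hS.2.2.1 T hT hTc⟩, hS.2.2.2⟩
  have card_le : ∀ X Y Z : Finset (Finset V), (∀ S ∈ X, S ∉ Z → S ∈ Y) →
      (X.card : ℝ) ≤ Y.card + Z.card := by
    intro X Y Z h
    have : X ⊆ Y ∪ Z := by
      intro S hS
      by_cases hZ : S ∈ Z
      · exact Finset.mem_union_right _ hZ
      · exact Finset.mem_union_left _ (h S hS hZ)
    exact_mod_cast (Finset.card_le_card this).trans (Finset.card_union_le _ _)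
  have c1 := card_le _ _ dirty hB
  have c2 := card_le (KsetC W cr' j (j + 1) Q) (KsetC W cr j (j + 1) (Q ∩ B)) dirty
    fun S hS hSd => (key S hSd Q hQ).1 hS
  have c3 := card_le (KsetC W cr j (j + 1) (Q ∩ B)) (KsetC W cr' j (j + 1) Q) dirty
    fun S hS hSd => (key S hSd Q hQ).2 hS
  have hun : ((dirty ∪ sd A A').card : ℝ) ≤ dirty.card + (sd A A').card := by
    exact_mod_cast Finset.card_union_le _ _
  have c4 := card_le (A' ∩ KsetC W cr' j (j + 1) Q) (A ∩ KsetC W cr j (j + 1) (Q ∩ B))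
    (dirty ∪ sd A A') (by
      intro S hS hSd
      rw [Finset.mem_union, not_or] at hSd
      rw [Finset.mem_inter] at hS ⊢
      refine ⟨?_, (key S hSd.1 Q hQ).1 hS.2⟩
      by_contra hA
      exact hSd.2 (Finset.mem_union_right _ (Finset.mem_sdiff.2 ⟨hS.1, hA⟩)))
  have c5 := card_le (A ∩ KsetC W cr j (j + 1) (Q ∩ B)) (A' ∩ KsetC W cr' j (j + 1) Q)
    (dirty ∪ sd A A') (by
      intro S hS hSd
      rw [Finset.mem_union, not_or] at hSd
      rw [Finset.mem_inter] at hS ⊢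
      refine ⟨?_, (key S hSd.1 Q hQ).2 hS.2⟩
      by_contra hA
      exact hSd.2 (Finset.mem_union_left _ (Finset.mem_sdiff.2 ⟨hS.1, hA⟩)))
  have hreg := hr (Q ∩ B) Finset.inter_subset_right
  generalize ((KsetC W cr j (j + 1) B).card : ℝ) = N at *
  generalize ((KsetC W cr' j (j + 1) B').card : ℝ) = N' at *
  generalize ((KsetC W cr' j (j + 1) Q).card : ℝ) = k2 at *
  generalize ((KsetC W cr j (j + 1) (Q ∩ B)).card : ℝ) = k1 at *
  generalize ((A' ∩ KsetC W cr' j (j + 1) Q).card : ℝ) = a2 at *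
  generalize ((A ∩ KsetC W cr j (j + 1) (Q ∩ B)).card : ℝ) = a1 at *
  have he : 0 ≤ e := le_trans (Nat.cast_nonneg _) hdc
  have c6 : (ε + δ) * (N - e) ≤ k2 :=
    le_trans (mul_le_mul_of_nonneg_left (by linarith) (by linarith)) hle
  have c7 : (ε + δ) * e ≤ 4 * e := mul_le_mul_of_nonneg_right (by linarith) he
  have c8 : ε * N ≤ k2 - e := by nlinarith
  have hr1 := abs_le.1 (hreg (by linarith))
  have c9 : ε * (k1 - k2) ≤ 3 * e := by
    nlinarith [mul_le_mul_of_nonneg_left (show k1 - k2 ≤ e by linarith) hε,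
      mul_le_mul_of_nonneg_right hε3 he]
  have c10 : d * (k1 - k2) ≤ e := by
    nlinarith [mul_le_mul_of_nonneg_left (show k1 - k2 ≤ e by linarith) hd,
      mul_le_mul_of_nonneg_right hd1 he]
  have c11 : -e ≤ d * (k1 - k2) := by
    nlinarith [mul_le_mul_of_nonneg_left (show k2 - k1 ≤ e by linarith) hd,
      mul_le_mul_of_nonneg_right hd1 he]
  have c12 : δ * (ε * N) ≤ δ * k2 := mul_le_mul_of_nonneg_left (by linarith) hδ
  rw [abs_le]
  constructor <;> nlinarith

namespace LabFam

variable {P Q : LabFam V} {k : ℕ} {a : ℕ → ℕ} {W : Finset V} {ν : ℝ}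

/-- Closeness of all parts makes the polyads at any address close, up to few `j`-sets. -/
lemma exists_exceptional (hP : P.IsLabeled k a) (hQ : Q.IsLabeled k a) (hPW : P.gnd = W)
    (hQW : Q.gnd = W) (hν : 0 ≤ ν) {j : ℕ} (hj : 1 ≤ j) {x : Addr}
    (hx : IsAddress (j + 1) j a x)
    (hPQ : ∀ (y : Addr) (b : ℕ), IsAddress j (j - 1) a y → 1 ≤ b → b ≤ a j →
      ((sd (P.partAt j y b) (Q.partAt j y b)).card : ℝ) ≤ ν * (W.card.choose j : ℝ)) :
    ∃ D : Finset (Finset V), (D.card : ℝ) ≤ (j + 1) * (ν * (W.card : ℝ) ^ j) ∧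
      (∀ T, T ∉ D → (T ∈ P.polyAt j x ↔ T ∈ Q.polyAt j x)) ∧
      (j = 1 → ∀ S ⊆ W, (∀ T ⊆ S, T.card = j → T ∉ D ∧ T ∈ P.polyAt j x) →
        (S ∈ P.toPartFam.cross (j + 1) ↔ S ∈ Q.toPartFam.cross (j + 1))) := by
  have hbound : ∀ (y : Addr) (b : ℕ), IsAddress j (j - 1) a y → 1 ≤ b → b ≤ a j →
      ((sd (P.partAt j y b) (Q.partAt j y b)).card : ℝ) ≤ ν * (W.card : ℝ) ^ j := by
    intro y b hy h1 h2
    refine (hPQ y b hy h1 h2).trans (mul_le_mul_of_nonneg_left ?_ hν)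
    exact_mod_cast Nat.choose_le_pow _ _
  have hcard : ∀ {ι : Type} (s : Finset ι) (g : ι → Finset (Finset V)), s.card = j + 1 →
      (∀ i ∈ s, ((g i).card : ℝ) ≤ ν * (W.card : ℝ) ^ j) →
      ((s.biUnion g).card : ℝ) ≤ (j + 1) * (ν * (W.card : ℝ) ^ j) := by
    intro ι s g hs hg
    calc ((s.biUnion g).card : ℝ) ≤ ∑ i ∈ s, ((g i).card : ℝ) := by
          exact_mod_cast Finset.card_biUnion_le
      _ ≤ ∑ i ∈ s, ν * (W.card : ℝ) ^ j := Finset.sum_le_sum hg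
      _ = (j + 1) * (ν * (W.card : ℝ) ^ j) := by
          rw [Finset.sum_const, hs, nsmul_eq_mul]; push_cast; ring
  by_cases hj1 : j = 1
  · subst hj1
    have hmem : ∀ (F : LabFam V), F.gnd = W → ∀ (b : ℕ) (v : V),
        {v} ∈ F.partAt 1 ({b}, fun _ => 0) b ↔ v ∈ W ∧ F.vIdx v = b := by
      intro F hFW b v
      unfold partAt
      rw [if_pos le_rfl, if_pos rfl, mem_sing, hFW]
      simp
    set D := x.1.biUnion fun b =>
      sd (P.partAt 1 ({b}, fun _ => 0) b) (Q.partAt 1 ({b}, fun _ => 0) b) with hD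
    have hDmem : ∀ v ∈ W, {v} ∉ D → ∀ b ∈ x.1, (P.vIdx v = b ↔ Q.vIdx v = b) := by
      intro v hv hvD b hb
      have : {v} ∉ sd (P.partAt 1 ({b}, fun _ => 0) b) (Q.partAt 1 ({b}, fun _ => 0) b) :=
        fun h => hvD (Finset.mem_biUnion.2 ⟨b, hb, h⟩)
      simp only [sd, Finset.mem_union, Finset.mem_sdiff, hmem P hPW, hmem Q hQW, hv,
        true_and] at this
      tauto
    have hsing : ∀ (F : LabFam V), F.gnd = W → ∀ T : Finset V,
        T ∈ F.polyAt 1 x ↔ ∃ v ∈ W, F.vIdx v ∈ x.1 ∧ T = {v} := by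
      intro F hFW T
      unfold polyAt
      rw [if_pos rfl, mem_sing, hFW]
      simp [and_assoc]
    refine ⟨D, ?_, ?_, ?_⟩
    · refine hcard _ _ hx.1 fun b hb => hbound _ b ?_ (hx.2.1 b hb).1 (hx.2.1 b hb).2
      refine ⟨by simp, ?_, ?_, fun _ _ => rfl⟩
      · intro i hi
        rw [Finset.mem_singleton.1 hi]
        exact hx.2.1 b hb
      · intro L _ h2 h3
        omega
    · intro T hT
      rw [hsing P hPW, hsing Q hQW]
      constructor
      · rintro ⟨v, hv, hvx, rfl⟩
        exact ⟨v, hv, by rwa [(hDmem v hv hT _ hvx).1 rfl], rfl⟩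
      · rintro ⟨v, hv, hvx, rfl⟩
        exact ⟨v, hv, by rwa [(hDmem v hv hT _ hvx).2 rfl], rfl⟩
    · intro _ S hS h
      rw [hP.mem_cross, hQ.mem_cross, hPW, hQW]
      refine and_congr_right fun _ => and_congr_right fun _ => ?_
      refine Set.EqOn.injOn_iff fun v hv => ?_
      obtain ⟨h1, h2⟩ := h {v} (by simpa using hv) (by simp)
      obtain ⟨u, hu, hux, huv⟩ := (hsing P hPW _).1 h2
      obtain rfl := Finset.singleton_inj.1 huv
      exact ((hDmem v hu h1 _ hux).1 rfl).symm
  · set D := (x.1.powersetCard j).biUnion fun B =>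
      sd (P.partAt j (restrictA x (j - 1) B) (x.2 B))
        (Q.partAt j (restrictA x (j - 1) B) (x.2 B)) with hD
    refine ⟨D, ?_, ?_, fun h => absurd h hj1⟩
    · refine hcard _ _ ?_ fun B hB => ?_
      · rw [Finset.card_powersetCard, hx.1, Nat.choose_succ_self_right]
      · obtain ⟨hB1, hB2⟩ := Finset.mem_powersetCard.1 hB
        have hxB := hx.2.2.1 B hB1 (by omega) (by omega)
        rw [hB2] at hxB
        refine hbound _ _ ⟨hB2, fun i hi => hx.2.1 i (hB1 hi), ?_,
          fun L hL => restrictA_snd_eq_zero L hL⟩ hxB.1 hxB.2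
        intro L hL h2 h3
        rw [restrictA_snd (show L ⊆ B from hL) h2 h3]
        exact hx.2.2.1 L (Finset.Subset.trans hL hB1) h2 (by omega)
    · intro T hT
      unfold polyAt
      rw [if_neg hj1, if_neg hj1]
      simp only [Finset.mem_sup]
      refine exists_congr fun B => and_congr_right fun hB => ?_
      have : T ∉ sd (P.partAt j (restrictA x (j - 1) B) (x.2 B))
        (Q.partAt j (restrictA x (j - 1) B) (x.2 B)) :=
        fun h => hT (Finset.mem_biUnion.2 ⟨B, hB, h⟩)
      simp only [sd, Finset.mem_union, Finset.mem_sdiff] at this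
      tauto

end LabFam

end Perturb

section Count

lemma subset_of_card_subsets {V : Type*} [DecidableEq V] {S G : Finset V} {j : ℕ} (hj : 1 ≤ j)
    (hS : j ≤ S.card) (h : ∀ T ⊆ S, T.card = j → T ⊆ G) : S ⊆ G := by
  intro v hv
  obtain ⟨T, hT1, hT2, hT3⟩ := Finset.exists_subsuperset_card_eq
    (s := {v}) (t := S) (n := j) (by simpa using hv) (by simpa using hj) hS
  exact h T hT2 hT3 (hT1 (by simp))

lemma isAddress_restrictA {a : ℕ → ℕ} {l j i : ℕ} {x : Addr} (hx : IsAddress l j a x)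
    (hij : i ≤ j) {B : Finset ℕ} (hB : B ⊆ x.1) :
    IsAddress B.card i a (restrictA x i B) := by
  refine ⟨rfl, fun b hb => hx.2.1 b (hB hb), ?_, fun L hL => LabFam.restrictA_snd_eq_zero L hL⟩
  intro L hL h2 h3
  rw [LabFam.restrictA_snd (show L ⊆ B from hL) h2 h3]
  exact hx.2.2.1 L (Finset.Subset.trans hL hB) h2 (h3.trans hij)

lemma one_add_two_mul_add_two_pow_le {p l : ℕ} (hp : 2 ≤ p) (hl : p ≤ l) :
    1 + 2 * p + 2 ^ p ≤ 4 ^ l := by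
  have h1 : p < 2 ^ p := Nat.lt_two_pow_self
  have h2 : (2 : ℕ) ^ 2 ≤ 2 ^ p := Nat.pow_le_pow_right (by norm_num) hp
  have h3 : (4 : ℕ) ^ p ≤ 4 ^ l := Nat.pow_le_pow_right (by norm_num) hl
  have h4 : (4 : ℕ) ^ p = 2 ^ p * 2 ^ p := by
    rw [← mul_pow]
    norm_num
  nlinarith

lemma regularity_transfer_bound {t m n p l : ℕ} {ε e : ℝ} (ht : 2 ≤ t) (hp : 2 ≤ p)
    (hl : p ≤ l) (hε : 0 ≤ ε) (he : ε * (4 * (t : ℝ) ^ (4 ^ l)) ≤ 3 * e)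
    (hn : n ≤ 2 * t * m) :
    ε * (n : ℝ) ^ p ≤ e * ((m : ℝ) ^ p / (2 * (t : ℝ) ^ (2 ^ p))) := by
  have ht1 : (2 : ℝ) ≤ t := by exact_mod_cast ht
  have hn' : (n : ℝ) ≤ (t : ℝ) ^ 2 * m := by
    have : (n : ℝ) ≤ 2 * t * m := by exact_mod_cast hn
    refine this.trans (mul_le_mul_of_nonneg_right ?_ (Nat.cast_nonneg _))
    nlinarith
  have h1 : (n : ℝ) ^ p ≤ (t : ℝ) ^ (2 * p) * (m : ℝ) ^ p := by
    rw [pow_mul, ← mul_pow]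
    exact pow_le_pow_left₀ (Nat.cast_nonneg _) hn' p
  have h2 : (t : ℝ) * (t : ℝ) ^ (2 * p) * (t : ℝ) ^ (2 ^ p) ≤ (t : ℝ) ^ (4 ^ l) := by
    rw [← pow_succ', ← pow_add]
    refine pow_le_pow_right₀ (by linarith) ?_
    have := one_add_two_mul_add_two_pow_le hp hl
    omega
  have ht0 : (0 : ℝ) < (t : ℝ) ^ (2 ^ p) := by positivity
  have ht0' : (0 : ℝ) < (t : ℝ) ^ (2 * p) := by positivity
  rw [mul_div_assoc', le_div_iff₀ (by positivity)]
  have h3 : ε * ((t : ℝ) ^ (2 * p) * (2 * (t : ℝ) ^ (2 ^ p))) ≤ e := by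
    have h4 : 3 / 2 * ((t : ℝ) ^ (2 * p) * (t : ℝ) ^ (2 ^ p)) ≤ (t : ℝ) ^ (4 ^ l) := by
      refine le_trans ?_ h2
      rw [mul_assoc]
      exact mul_le_mul_of_nonneg_right (by linarith) (by positivity)
    nlinarith [mul_le_mul_of_nonneg_left h4 hε]
  calc ε * (n : ℝ) ^ p * (2 * (t : ℝ) ^ (2 ^ p))
      ≤ ε * ((t : ℝ) ^ (2 * p) * (m : ℝ) ^ p) * (2 * (t : ℝ) ^ (2 ^ p)) := by gcongr
    _ = ε * ((t : ℝ) ^ (2 * p) * (2 * (t : ℝ) ^ (2 ^ p))) * (m : ℝ) ^ p := by ring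
    _ ≤ e * (m : ℝ) ^ p := by gcongr

lemma prod_inv_pow_choose_ge {a : ℕ → ℕ} {t j : ℕ} (ht : 1 ≤ t)
    (ha : ∀ i, 2 ≤ i → i ≤ j → 1 ≤ a i ∧ a i ≤ t) :
    (1 : ℝ) / (t : ℝ) ^ (2 ^ (j + 1)) ≤
      ∏ i ∈ Finset.Icc 2 j, (1 / (a i : ℝ)) ^ ((j + 1).choose i) := by
  have ht1 : (1 : ℝ) ≤ t := by exact_mod_cast ht
  calc (1 : ℝ) / (t : ℝ) ^ (2 ^ (j + 1)) = (1 / (t : ℝ)) ^ (2 ^ (j + 1)) := by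
        rw [one_div_pow]
    _ ≤ (1 / (t : ℝ)) ^ (∑ i ∈ Finset.Icc 2 j, (j + 1).choose i) := by
        refine pow_le_pow_of_le_one (by positivity) ?_ ?_
        · rw [div_le_one (by linarith)]; exact ht1
        · rw [← Nat.sum_range_choose]
          refine Finset.sum_le_sum_of_subset fun i hi => ?_
          rw [Finset.mem_Icc] at hi
          rw [Finset.mem_range]; omega
    _ = ∏ i ∈ Finset.Icc 2 j, (1 / (t : ℝ)) ^ ((j + 1).choose i) :=
        (Finset.prod_pow_eq_pow_sum _ _ _).symm
    _ ≤ _ := by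
        refine Finset.prod_le_prod (fun i _ => by positivity) fun i hi => ?_
        rw [Finset.mem_Icc] at hi
        obtain ⟨h1, h2⟩ := ha i hi.1 hi.2
        refine pow_le_pow_left₀ (by positivity) ?_ _
        have : (1 : ℝ) ≤ a i := by exact_mod_cast h1
        exact one_div_le_one_div_of_le (by linarith) (by exact_mod_cast h2)

namespace LabFam

variable {V : Type} [DecidableEq V] {F : LabFam V} {k : ℕ} {a : ℕ → ℕ}

/-- The complex spanned inside `U` by the parts at the restrictions of the address `x`. -/
noncomputable def addrComplex (F : LabFam V) (U : Finset V) {l : ℕ} (x : Addr)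
    (σ : Fin l → ℕ) : Cx V l where
  C := fun i => U.filter fun v => F.vIdx v = σ i
  G := fun i => (F.polyAt i x).filter fun S => S ⊆ U

section Complex

variable {U : Finset V} {l : ℕ} {x : Addr} {σ : Fin l → ℕ}

lemma subset_sup_C {L : Finset (Fin l)} {S : Finset V} :
    S ⊆ L.sup (F.addrComplex U x σ).C ↔ S ⊆ U ∧ S.image F.vIdx ⊆ L.image σ := by
  have : ∀ v, v ∈ L.sup (F.addrComplex U x σ).C ↔ v ∈ U ∧ F.vIdx v ∈ L.image σ := by
    intro v
    simp only [Finset.mem_sup, addrComplex, mem_filter, mem_image]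
    constructor
    · rintro ⟨i, hi, hv, h⟩
      exact ⟨hv, i, hi, h.symm⟩
    · rintro ⟨hv, i, hi, h⟩
      exact ⟨i, hi, hv, h.symm⟩
  constructor
  · intro h
    refine ⟨fun v hv => ((this v).1 (h hv)).1, fun b hb => ?_⟩
    obtain ⟨v, hv, rfl⟩ := Finset.mem_image.1 hb
    exact ((this v).1 (h hv)).2
  · rintro ⟨h1, h2⟩ v hv
    exact (this v).2 ⟨h1 hv, h2 (Finset.mem_image_of_mem _ hv)⟩

lemma subset_gnd_addrComplex {S : Finset V} (hσ : Finset.univ.image σ = x.1) :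
    S ⊆ (F.addrComplex U x σ).gnd ↔ S ⊆ U ∧ S.image F.vIdx ⊆ x.1 := by
  rw [← hσ]
  exact subset_sup_C

lemma IsLabeled.mem_cross_addrComplex (hF : F.IsLabeled k a) (hU : U ⊆ F.gnd)
    (hσ : Finset.univ.image σ = x.1) {i : ℕ} {S : Finset V} :
    S ∈ (F.addrComplex U x σ).cross i ↔
      S ∈ F.toPartFam.cross i ∧ S ⊆ U ∧ S.image F.vIdx ⊆ x.1 := by
  unfold Cx.cross
  rw [mem_filter, mem_powersetCard, subset_gnd_addrComplex hσ, hF.mem_cross]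
  constructor
  · rintro ⟨⟨⟨h1, h2⟩, h3⟩, h4⟩
    refine ⟨⟨h1.trans hU, h3, fun u hu v hv huv => ?_⟩, h1, h2⟩
    have : F.vIdx u ∈ Finset.univ.image σ := hσ ▸ h2 (Finset.mem_image_of_mem _ hu)
    obtain ⟨t, -, ht⟩ := Finset.mem_image.1 this
    refine Finset.card_le_one.1 (h4 t) u ?_ v ?_ <;>
      simp only [addrComplex, mem_inter, mem_filter]
    · exact ⟨hu, h1 hu, ht.symm⟩
    · exact ⟨hv, h1 hv, by rw [← huv, ht]⟩
  · rintro ⟨⟨-, h2, h3⟩, h4, h5⟩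
    refine ⟨⟨⟨h4, h5⟩, h2⟩, fun t => Finset.card_le_one.2 fun u hu v hv => ?_⟩
    simp only [addrComplex, mem_inter, mem_filter] at hu hv
    exact h3 hu.1 hv.1 (hu.2.2.trans hv.2.2.symm)

lemma IsLabeled.isComplex_addrComplex (hF : F.IsLabeled k a) (hU : U ⊆ F.gnd)
    (hσ : Finset.univ.image σ = x.1) (hinj : Function.Injective σ) (j : ℕ) :
    (F.addrComplex U x σ).IsComplex j := by
  have hcr : ∀ i, 2 ≤ i → i ≤ j →
      (F.addrComplex U x σ).G i ⊆ (F.addrComplex U x σ).cross i := by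
    intro i hi _ S hS
    simp only [addrComplex, mem_filter] at hS
    have h := (hF.mem_polyAt (by omega)).1 hS.1
    exact (hF.mem_cross_addrComplex hU hσ).2 ⟨h.1, hS.2, h.2.1⟩
  refine ⟨?_, hcr, ?_⟩
  · intro s t hst
    rw [Finset.disjoint_left]
    intro v hv hv'
    simp only [addrComplex, mem_filter] at hv hv'
    exact hst (hinj (hv.2.symm.trans hv'.2))
  · intro i hi hij S hS
    have h1 := (hF.mem_cross_addrComplex hU hσ).1 (hcr i (by omega) hij hS)
    simp only [addrComplex, mem_filter] at hS
    have h := (hF.mem_polyAt (by omega)).1 hS.1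
    unfold Kset
    simp only [mem_filter, mem_powersetCard]
    refine ⟨⟨(subset_gnd_addrComplex hσ).2 h1.2, (hF.mem_cross.1 h1.1).2.1⟩, ?_⟩
    rintro T ⟨hT, hTc⟩
    simp only [addrComplex, mem_filter]
    refine ⟨(hF.mem_polyAt (by omega)).2 ⟨hTc ▸ hF.cross_mono h1.1 hT,
      (Finset.image_subset_image hT).trans h1.2.2, fun T' hT' h2 => h.2.2 T' (hT'.trans hT) h2⟩,
      hT.trans h1.2.1⟩

lemma IsLabeled.mem_restr_addrComplex (hF : F.IsLabeled k a) (hU : U ⊆ F.gnd)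
    (hσ : Finset.univ.image σ = x.1) {i : ℕ} (hi : 1 ≤ i) {L : Finset (Fin l)} {T : Finset V} :
    T ∈ (F.addrComplex U x σ).restr i L ↔
      T ∈ F.polyAt i (restrictA x i (L.image σ)) ∧ T ⊆ U := by
  unfold Cx.restr
  split_ifs with h
  · subst h
    unfold polyAt
    rw [if_pos rfl, mem_sing, mem_sing]
    constructor
    · rintro ⟨v, hv, rfl⟩
      have := subset_sup_C.1 (Finset.singleton_subset_iff.2 hv)
      simp only [Finset.singleton_subset_iff, Finset.image_singleton] at this
      refine ⟨⟨v, ?_, rfl⟩, by simpa using this.1⟩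
      rw [mem_filter]
      exact ⟨hU this.1, this.2⟩
    · rintro ⟨⟨v, hv, rfl⟩, hT⟩
      rw [mem_filter] at hv
      refine ⟨v, Finset.singleton_subset_iff.1 (subset_sup_C.2 ⟨hT, ?_⟩), rfl⟩
      rw [Finset.image_singleton, Finset.singleton_subset_iff]
      exact hv.2
  · rw [mem_filter, subset_sup_C, hF.mem_polyAt hi]
    have hG : T ∈ (F.addrComplex U x σ).G i ↔ T ∈ F.polyAt i x ∧ T ⊆ U := by
      simp only [addrComplex, mem_filter]
    rw [hG, hF.mem_polyAt hi]
    have hLx : L.image σ ⊆ x.1 := hσ ▸ Finset.image_subset_image (Finset.subset_univ _)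
    have hcard : ∀ T' ⊆ T, T ∈ F.toPartFam.cross i →
        (T'.image F.vIdx).card = T'.card ∧ T'.card ≤ i := by
      intro T' hT' hT
      have h := hF.mem_cross.1 hT
      exact ⟨Finset.card_image_of_injOn (h.2.2.mono (by exact_mod_cast hT')),
        h.2.1 ▸ Finset.card_le_card hT'⟩
    constructor
    · rintro ⟨⟨⟨h1, -, h3⟩, h4⟩, -, h5⟩
      refine ⟨⟨h1, h5, fun T' hT' h2 => ?_⟩, h4⟩
      obtain ⟨hc1, hc2⟩ := hcard T' hT' h1
      rw [h3 T' hT' h2, restrictA_snd ((Finset.image_subset_image hT').trans h5)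
        (by omega) (by omega)]
    · rintro ⟨⟨h1, h5, h3⟩, h4⟩
      refine ⟨⟨⟨h1, Finset.Subset.trans h5 hLx, fun T' hT' h2 => ?_⟩, h4⟩, h4, h5⟩
      obtain ⟨hc1, hc2⟩ := hcard T' hT' h1
      rw [h3 T' hT' h2, restrictA_snd (show T'.image F.vIdx ⊆ L.image σ from
        (Finset.image_subset_image hT').trans h5) (by omega) (by omega)]

lemma IsLabeled.regPairC_addrComplex (hF : F.IsLabeled k a) (hU : U ⊆ F.gnd)
    (hσ : Finset.univ.image σ = x.1) (hinj : Function.Injective σ) {j i : ℕ}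
    (hx : IsAddress l j a x) (hi : 1 ≤ i) (hij : i + 1 ≤ j) {L : Finset (Fin l)}
    (hL : L.card = i + 1) {ε ε' d : ℝ} (hε : ε ≤ ε')
    (hr : RegPairC F.gnd (F.toPartFam.cross (i + 1)) i ε d
      (F.partAt (i + 1) (restrictA x i (L.image σ)) (x.2 (L.image σ)))
      (F.polyAt i (restrictA x i (L.image σ))))
    (hlow : ε * ((KsetC F.gnd (F.toPartFam.cross (i + 1)) i (i + 1)
        (F.polyAt i (restrictA x i (L.image σ)))).card : ℝ) ≤
      ε' * (((KsetC F.gnd (F.toPartFam.cross (i + 1)) i (i + 1)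
        (F.polyAt i (restrictA x i (L.image σ)))).filter fun S => S ⊆ U).card : ℝ)) :
    RegPairC (F.addrComplex U x σ).gnd ((F.addrComplex U x σ).cross (i + 1)) i ε' d
      ((F.addrComplex U x σ).G (i + 1)) ((F.addrComplex U x σ).restr i L) := by
  set X := F.addrComplex U x σ with hX
  set y := restrictA x i (L.image σ) with hy
  have hLx : L.image σ ⊆ x.1 := hσ ▸ Finset.image_subset_image (Finset.subset_univ _)
  have hLc : (L.image σ).card = i + 1 := by rw [Finset.card_image_of_injective _ hinj, hL]
  have hyA : IsAddress (i + 1) i a y := hLc ▸ isAddress_restrictA hx (by omega) hLx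
  have hcrX : ∀ S ∈ X.cross (i + 1), S ⊆ X.gnd ∧ S.card = i + 1 := by
    intro S hS
    unfold Cx.cross at hS
    simp only [mem_filter, mem_powersetCard] at hS
    exact hS.1
  have hK : ∀ Q ⊆ X.restr i L, KsetC X.gnd (X.cross (i + 1)) i (i + 1) Q =
      KsetC F.gnd (F.toPartFam.cross (i + 1)) i (i + 1) Q := by
    intro Q hQ
    ext S
    rw [mem_KsetC_iff hi hcrX, mem_KsetC_iff hi (F.cross_subset_card _)]
    have hQU : ∀ T ∈ Q, T ⊆ U ∧ T.image F.vIdx ⊆ x.1 := by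
      intro T hT
      obtain ⟨h1, h2⟩ := (hF.mem_restr_addrComplex hU hσ hi).1 (hQ hT)
      exact ⟨h2, Finset.Subset.trans ((hF.mem_polyAt hi).1 h1).2.1 hLx⟩
    have hgX : (∀ T ⊆ S, T.card = i → T ∈ Q) → S.card = i + 1 → S ⊆ X.gnd := by
      intro h hc
      exact subset_of_card_subsets hi (by omega) fun T hT hTc =>
        (subset_gnd_addrComplex hσ).2 (hQU T (h T hT hTc))
    constructor
    · rintro ⟨h1, h2, h3, h4⟩
      refine ⟨((subset_gnd_addrComplex hσ).1 h1).1.trans hU, h2, h3, fun h => ?_⟩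
      exact ((hF.mem_cross_addrComplex hU hσ).1 (h4 h)).1
    · rintro ⟨h1, h2, h3, h4⟩
      have h5 := hgX h3 h2
      exact ⟨h5, h2, h3, fun h => (hF.mem_cross_addrComplex hU hσ).2
        ⟨h4 h, (subset_gnd_addrComplex hσ).1 h5⟩⟩
  have hsub : X.restr i L ⊆ F.polyAt i y := fun T hT =>
    ((hF.mem_restr_addrComplex hU hσ hi).1 hT).1
  have hKr : KsetC F.gnd (F.toPartFam.cross (i + 1)) i (i + 1) (X.restr i L) =
      (KsetC F.gnd (F.toPartFam.cross (i + 1)) i (i + 1) (F.polyAt i y)).filter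
        fun S => S ⊆ U := by
    ext S
    rw [mem_filter, mem_KsetC_iff hi (F.cross_subset_card _),
      mem_KsetC_iff hi (F.cross_subset_card _)]
    constructor
    · rintro ⟨h1, h2, h3, h4⟩
      refine ⟨⟨h1, h2, fun T hT hTc => hsub (h3 T hT hTc), h4⟩, ?_⟩
      exact subset_of_card_subsets hi (by omega) fun T hT hTc =>
        ((hF.mem_restr_addrComplex hU hσ hi).1 (h3 T hT hTc)).2
    · rintro ⟨⟨h1, h2, h3, h4⟩, h5⟩
      exact ⟨h1, h2, fun T hT hTc => (hF.mem_restr_addrComplex hU hσ hi).2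
        ⟨h3 T hT hTc, hT.trans h5⟩, h4⟩
  intro Q hQ hle
  rw [hK Q hQ] at hle ⊢
  rw [hK _ subset_rfl, hKr] at hle
  have hG : X.G (i + 1) ∩ KsetC F.gnd (F.toPartFam.cross (i + 1)) i (i + 1) Q =
      F.partAt (i + 1) y (x.2 (L.image σ)) ∩
        KsetC F.gnd (F.toPartFam.cross (i + 1)) i (i + 1) Q := by
    ext S
    rw [mem_inter, mem_inter]
    refine and_congr_left fun hS => ?_
    have hS1 := KsetC_mono hi (F.cross_subset_card _) hQ hS
    have hSU : S ⊆ U := by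
      rw [hKr, mem_filter] at hS1; exact hS1.2
    have hS2 := KsetC_mono hi (F.cross_subset_card _) hsub hS1
    rw [hF.mem_cliques_polyAt hi hyA.1 hyA.2.2.2] at hS2
    obtain ⟨hS2, hadr⟩ := hS2
    obtain ⟨-, hSc, hSinj⟩ := hF.mem_cross.1 hS2
    have hadr' := (addrOf_eq_iff hSinj hyA.2.2.2).1 hadr
    have himg : S.image F.vIdx = L.image σ := hadr'.1
    have hmG : S ∈ X.G (i + 1) ↔ S ∈ F.polyAt (i + 1) x ∧ S ⊆ U := by
      simp only [hX, addrComplex, mem_filter]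
    rw [hmG, hF.mem_polyAt (by omega), mem_partAt (by omega), Nat.add_sub_cancel]
    constructor
    · rintro ⟨⟨h1, h2, h3⟩, -⟩
      have := h3 S subset_rfl (by omega)
      rw [himg, hSc] at this
      exact ⟨h1, hadr, this⟩
    · rintro ⟨h1, -, h3⟩
      refine ⟨⟨h1, himg ▸ hLx, fun T hT hT2 => ?_⟩, hSU⟩
      by_cases hTi : T.card ≤ i
      · have hTc : (T.image F.vIdx).card = T.card :=
          Finset.card_image_of_injOn (hSinj.mono (by exact_mod_cast hT))
        rw [hadr'.2 T hT hT2 hTi, hy, restrictA_snd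
          (himg ▸ Finset.image_subset_image hT) (by omega) (by omega)]
      · have := Finset.eq_of_subset_of_card_le hT (by omega)
        rw [this, himg, hSc, h3]
  rw [hG]
  exact (hr Q (hQ.trans hsub) (hlow.trans hle)).trans
    (mul_le_mul_of_nonneg_right hε (Nat.cast_nonneg _))

end Complex

/-- Polyads of an equitable family have many cliques, even inside a set `U` that meets every
vertex class in exactly `m` vertices. -/
lemma IsLabeled.card_cliques_ge (hF : F.IsLabeled k a) {ε : ℝ} (hε : 0 < ε)
    (hR : F.toPartFam.PolyadReg k a ε) {t m : ℕ} (ht : 2 ≤ t)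
    (ha : ∀ i, 1 ≤ i → i ≤ k - 1 → 1 ≤ a i ∧ a i ≤ t) (hm : 1 ≤ m)
    (hn : F.gnd.card ≤ 2 * t * m)
    {eCL : ℝ → ℝ → ℕ → ℕ → ℝ} {mCL : ℝ → ℝ → ℕ → ℕ → ℕ} (hCP : CountingProp eCL mCL)
    (hmCL : ∀ l, 3 ≤ l → l ≤ k → mCL (1 / (t : ℝ)) (1 / (t : ℝ)) (l - 1) l ≤ m)
    (heCL : ∀ l, 3 ≤ l → l ≤ k →
      ε * (4 * (t : ℝ) ^ (4 ^ l)) ≤ 3 * eCL (1 / (t : ℝ)) (1 / (t : ℝ)) (l - 1) l)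
    {U : Finset V} (hU : U ⊆ F.gnd)
    (hUm : ∀ b, 1 ≤ b → b ≤ a 1 → (U.filter fun v => F.vIdx v = b).card = m) :
    ∀ j, 1 ≤ j → j + 1 ≤ k → ∀ x : Addr, IsAddress (j + 1) j a x →
      (m : ℝ) ^ (j + 1) / (2 * (t : ℝ) ^ (2 ^ (j + 1))) ≤
        (((KsetC F.gnd (F.toPartFam.cross (j + 1)) j (j + 1) (F.polyAt j x)).filter
          fun S => S ⊆ U).card : ℝ) := by
  have ht1 : (2 : ℝ) ≤ t := by exact_mod_cast ht
  intro j
  induction j using Nat.strong_induction_on with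
  | _ j ih =>
  intro hj hjk x hx
  by_cases hj1 : j = 1
  · subst hj1
    obtain ⟨b, c, hbc, hxbc⟩ := Finset.card_eq_two.1 hx.1
    have hb := hx.2.1 b (by rw [hxbc]; simp)
    have hc := hx.2.1 c (by rw [hxbc]; simp)
    have hcard : m ^ 2 ≤ ((KsetC F.gnd (F.toPartFam.cross (1 + 1)) 1 (1 + 1)
        (F.polyAt 1 x)).filter fun S => S ⊆ U).card := by
      have h1 : ((U.filter fun v => F.vIdx v = b) ×ˢ (U.filter fun v => F.vIdx v = c)).card
          = m ^ 2 := by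
        rw [Finset.card_product, hUm b hb.1 hb.2, hUm c hc.1 hc.2, sq]
      rw [← h1]
      refine Finset.card_le_card_of_injOn (fun p => {p.1, p.2}) ?_ ?_
      · rintro ⟨u, v⟩ hp
        simp only [coe_product, coe_filter, Set.mem_prod, Set.mem_ofPred_eq] at hp
        obtain ⟨⟨hu, hub⟩, hv, hvc⟩ := hp
        have huv : u ≠ v := by rintro rfl; exact hbc (hub.symm.trans hvc)
        have hcr : ({u, v} : Finset V) ∈ F.toPartFam.cross (1 + 1) := by
          rw [hF.mem_cross]
          refine ⟨?_, Finset.card_pair huv, ?_⟩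
          · intro w hw
            simp only [mem_insert, mem_singleton] at hw
            rcases hw with rfl | rfl
            · exact hU hu
            · exact hU hv
          · intro w hw w' hw' h
            simp only [coe_insert, coe_singleton, Set.mem_insert_iff,
              Set.mem_singleton_iff] at hw hw'
            rcases hw with rfl | rfl <;> rcases hw' with rfl | rfl
            · rfl
            · exact absurd (hub.symm.trans (h.trans hvc)) hbc
            · exact absurd (hub.symm.trans (h.symm.trans hvc)) hbc
            · rfl
        rw [Finset.mem_coe, mem_filter, hF.mem_cliques_polyAt le_rfl hx.1 hx.2.2.2,
          addrOf_eq_iff (hF.mem_cross.1 hcr).2.2 hx.2.2.2]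
        refine ⟨⟨hcr, ?_, fun T _ h2 h3 => by omega⟩, ?_⟩
        · rw [Finset.image_insert, Finset.image_singleton, hub, hvc, hxbc]
        · intro w hw
          simp only [mem_insert, mem_singleton] at hw
          rcases hw with rfl | rfl <;> assumption
      · rintro ⟨u, v⟩ hp ⟨u', v'⟩ hp' h
        simp only [coe_product, coe_filter, Set.mem_prod, Set.mem_ofPred_eq] at hp hp'
        obtain ⟨⟨hu, hub⟩, hv, hvc⟩ := hp
        obtain ⟨⟨hu', hub'⟩, hv', hvc'⟩ := hp'
        simp only at h
        have h1 : u ∈ ({u', v'} : Finset V) := h ▸ Finset.mem_insert_self _ _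
        have h2 : v ∈ ({u', v'} : Finset V) := h ▸ by simp
        simp only [mem_insert, mem_singleton] at h1 h2
        have h3 : u = u' := h1.resolve_right fun h => hbc (by rw [← hub, h, hvc'])
        have h4 : v = v' := h2.resolve_left fun h => hbc (by rw [← hvc, h, hub'])
        rw [h3, h4]
    have hcard' : (m : ℝ) ^ (1 + 1) ≤ (((KsetC F.gnd (F.toPartFam.cross (1 + 1)) 1 (1 + 1)
        (F.polyAt 1 x)).filter fun S => S ⊆ U).card : ℝ) := by exact_mod_cast hcard
    refine le_trans (div_le_self (by positivity) ?_) hcard'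
    have : (1 : ℝ) ≤ (t : ℝ) ^ (2 ^ (1 + 1)) := one_le_pow₀ (by linarith)
    linarith
  · have hj2 : 2 ≤ j := by omega
    set σ : Fin (j + 1) → ℕ := fun i => ((x.1.equivFinOfCardEq hx.1).symm i : ℕ) with hσd
    have hinj : Function.Injective σ :=
      Subtype.val_injective.comp (x.1.equivFinOfCardEq hx.1).symm.injective
    have hσ : Finset.univ.image σ = x.1 := by
      ext b
      simp only [mem_image, mem_univ, true_and]
      constructor
      · rintro ⟨i, rfl⟩
        exact ((x.1.equivFinOfCardEq hx.1).symm i).2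
      · intro hb
        exact ⟨x.1.equivFinOfCardEq hx.1 ⟨b, hb⟩, by simp [hσd]⟩
    set X := F.addrComplex U x σ with hX
    have hCcard : ∀ i, (X.C i).card = m := fun i => by
      have := hx.2.1 (σ i) (hσ ▸ Finset.mem_image_of_mem _ (Finset.mem_univ i))
      exact hUm _ this.1 this.2
    obtain ⟨⟨he0, -⟩, hcount⟩ := hCP (1 / (t : ℝ)) (1 / (t : ℝ)) (by positivity) (by positivity)
      j (j + 1) hj2 (by omega)
    set e := eCL (1 / (t : ℝ)) (1 / (t : ℝ)) j (j + 1) with he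
    have hee : ε * (4 * (t : ℝ) ^ (4 ^ (j + 1))) ≤ 3 * e := by
      have := heCL (j + 1) (by omega) hjk
      rwa [Nat.add_sub_cancel] at this
    have hεe : ε ≤ e := by
      have : (1 : ℝ) ≤ (t : ℝ) ^ (4 ^ (j + 1)) := one_le_pow₀ (by linarith)
      nlinarith
    have hai : ∀ i, 2 ≤ i → i ≤ j → 1 ≤ a i ∧ a i ≤ t := fun i h1 h2 =>
      ha i (by omega) (by omega)
    have hreg : X.IsRegular j e fun i => 1 / (a i : ℝ) := by
      intro i' hi hij L hL
      obtain ⟨i, rfl⟩ : ∃ i, i' = i + 1 := ⟨i' - 1, by omega⟩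
      have hLc := (Finset.mem_powersetCard.1 hL).2
      rw [Nat.add_sub_cancel]
      have hLx : L.image σ ⊆ x.1 := hσ ▸ Finset.image_subset_image (Finset.subset_univ _)
      have hLic : (L.image σ).card = i + 1 := by
        rw [Finset.card_image_of_injective _ hinj, hLc]
      have hyA : IsAddress (i + 1) i a (restrictA x i (L.image σ)) :=
        hLic ▸ isAddress_restrictA hx (by omega) hLx
      have hlow := ih i (by omega) (by omega) (by omega) _ hyA
      have hpos : (0 : ℝ) < (m : ℝ) ^ (i + 1) / (2 * (t : ℝ) ^ (2 ^ (i + 1))) := by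
        have : (0 : ℝ) < m := by exact_mod_cast hm
        positivity
      have hne : 0 < ((KsetC F.gnd (F.toPartFam.cross (i + 1)) i (i + 1)
          (F.polyAt i (restrictA x i (L.image σ)))).filter fun S => S ⊆ U).card := by
        exact_mod_cast hpos.trans_le hlow
      obtain ⟨J, hJ⟩ := Finset.card_pos.1 hne
      rw [mem_filter, hF.mem_cliques_polyAt (by omega) hyA.1 hyA.2.2.2] at hJ
      have hb := hx.2.2.1 (L.image σ) hLx (by omega) (by omega)
      rw [hLic] at hb
      have hr := hF.regPairC_partAt hR (by omega) (by omega) hJ.1.1 hb.1 hb.2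
      rw [hJ.1.2] at hr
      refine hF.regPairC_addrComplex hU hσ hinj hx (by omega) hij hLc hεe hr ?_
      refine le_trans ?_ (mul_le_mul_of_nonneg_left hlow he0.le)
      refine le_trans ?_ (regularity_transfer_bound ht hi (by omega) hε.le hee hn)
      refine mul_le_mul_of_nonneg_left ?_ hε.le
      have h1 : KsetC F.gnd (F.toPartFam.cross (i + 1)) i (i + 1)
          (F.polyAt i (restrictA x i (L.image σ))) ⊆ F.gnd.powersetCard (i + 1) := by
        intro S hS
        rw [mem_KsetC_iff (by omega) (F.cross_subset_card _)] at hS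
        exact Finset.mem_powersetCard.2 ⟨hS.1, hS.2.1⟩
      have h2 := (Finset.card_le_card h1).trans (Finset.card_powersetCard _ _).le
      exact_mod_cast h2.trans (Nat.choose_le_pow _ _)
    have hmain := hcount V X m 0 e (fun i => 1 / (a i : ℝ)) le_rfl (by norm_num) he0 le_rfl
      (by have := hmCL (j + 1) (by omega) hjk; rwa [Nat.add_sub_cancel] at this)
      (fun i h1 h2 => by
        obtain ⟨h3, h4⟩ := hai i h1 h2
        have : (1 : ℝ) ≤ a i := by exact_mod_cast h3
        exact one_div_le_one_div_of_le (by linarith) (by exact_mod_cast h4))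
      (hF.isComplex_addrComplex hU hσ hinj j)
      (fun i => by rw [hCcard i]; simp) hreg
    have hprod : ∏ i, ((X.C i).card : ℝ) = (m : ℝ) ^ (j + 1) := by
      rw [Finset.prod_congr rfl fun i _ => by rw [hCcard i]]
      simp
    rw [hprod] at hmain
    have hsub : Kset X.gnd j (j + 1) (X.G j) ⊆
        (KsetC F.gnd (F.toPartFam.cross (j + 1)) j (j + 1) (F.polyAt j x)).filter
          fun S => S ⊆ U := by
      intro S hS
      unfold Kset at hS
      simp only [mem_filter, mem_powersetCard] at hS
      obtain ⟨⟨h1, h2⟩, h3⟩ := hS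
      have h4 := ((subset_gnd_addrComplex hσ).1 h1).1
      rw [mem_filter, mem_KsetC_iff hj (F.cross_subset_card _)]
      refine ⟨⟨h4.trans hU, h2, fun T hT hTc => ?_, fun h => absurd h hj1⟩, h4⟩
      have := h3 T ⟨hT, hTc⟩
      simp only [hX, addrComplex, mem_filter] at this
      exact this.1
    have hsub' : ((Kset X.gnd j (j + 1) (X.G j)).card : ℝ) ≤ _ :=
      Nat.cast_le.2 (Finset.card_le_card hsub)
    refine le_trans ?_ hsub'
    have hpr := prod_inv_pow_choose_ge (by omega) hai
    set D := ∏ i ∈ Finset.Icc 2 j, (1 / (a i : ℝ)) ^ ((j + 1).choose i) with hD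
    have h5 := (abs_le.1 hmain).1
    have hmp : (0 : ℝ) ≤ (m : ℝ) ^ (j + 1) := by positivity
    have h6 : 1 / (t : ℝ) ^ (2 ^ (j + 1)) * (m : ℝ) ^ (j + 1) ≤ D * (m : ℝ) ^ (j + 1) :=
      mul_le_mul_of_nonneg_right hpr hmp
    have h7 : (0 : ℝ) ≤ 1 / (t : ℝ) ^ (2 ^ (j + 1)) * (m : ℝ) ^ (j + 1) := by positivity
    have h8 : 1 / (t : ℝ) * (D * (m : ℝ) ^ (j + 1)) ≤ 1 / 2 * (D * (m : ℝ) ^ (j + 1)) :=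
      mul_le_mul_of_nonneg_right (one_div_le_one_div_of_le (by norm_num) ht1) (h7.trans h6)
    have h9 : (m : ℝ) ^ (j + 1) / (2 * (t : ℝ) ^ (2 ^ (j + 1))) =
        1 / 2 * (1 / (t : ℝ) ^ (2 ^ (j + 1)) * (m : ℝ) ^ (j + 1)) := by
      field_simp
    rw [h9]
    linarith

end LabFam

end Count

section Perturbation

lemma sd_comm {V : Type*} [DecidableEq V] (A B : Finset (Finset V)) : sd A B = sd B A :=
  Finset.union_comm _ _

/-- Bounds on the complexity of regularity instances with a fixed parameter. -/
lemma GoodERI.exists_bounds {eRI : ℕ → ℕ → ℝ} (hERI : GoodERI eRI) {k : ℕ} {ε : ℝ}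
    (hε : 0 < ε) :
    ∃ (T M : ℕ) (eCL : ℝ → ℝ → ℕ → ℕ → ℝ) (mCL : ℝ → ℝ → ℕ → ℕ → ℕ),
      2 ≤ T ∧ CountingProp eCL mCL ∧ ∀ t : ℕ, 1 ≤ t → ε / 3 ≤ eRI t k → t ≤ T ∧
        ∀ l, 3 ≤ l → l ≤ k → mCL (1 / (t : ℝ)) (1 / (t : ℝ)) (l - 1) l ≤ M ∧
          ε * (4 * (t : ℝ) ^ (4 ^ l)) ≤ 3 * eCL (1 / (t : ℝ)) (1 / (t : ℝ)) (l - 1) l := by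
  obtain ⟨-, -, hanti, htend, eCL, mCL, hCP, hlt⟩ := hERI
  obtain ⟨T, hT⟩ := Filter.eventually_atTop.1
    ((htend k).eventually_lt_const (show (0 : ℝ) < ε / 3 by positivity))
  refine ⟨max T 2, (Finset.range (max T 2 + 1)).sup fun t => (Finset.range (k + 1)).sup fun l =>
    mCL (1 / (t : ℝ)) (1 / (t : ℝ)) (l - 1) l, eCL, mCL, le_max_right _ _, hCP, ?_⟩
  intro t ht hεt
  have htT : t ≤ max T 2 := by
    by_contra h
    exact absurd (hT t (by omega)) (not_lt.2 hεt)
  refine ⟨htT, fun l hl hlk => ⟨?_, ?_⟩⟩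
  · exact (Finset.le_sup (f := fun l => mCL (1 / (t : ℝ)) (1 / (t : ℝ)) (l - 1) l)
      (Finset.mem_range.2 (by omega : l < k + 1))).trans
      (Finset.le_sup (f := fun t : ℕ => (Finset.range (k + 1)).sup fun l =>
        mCL (1 / (t : ℝ)) (1 / (t : ℝ)) (l - 1) l) (Finset.mem_range.2 (by omega)))
  · have h1 := (hεt.trans (hanti t l k (by omega) hlk)).trans_lt (hlt t l ht (by omega))
    have ht0 : (0 : ℝ) < t := by exact_mod_cast ht
    rw [lt_div_iff₀ (by positivity)] at h1
    linarith

namespace LabFam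

variable {V : Type*} [DecidableEq V] {P Q : LabFam V} {k : ℕ} {a : ℕ → ℕ} {W : Finset V}

lemma partAt_one (F : LabFam V) (b : ℕ) :
    F.partAt 1 ({b}, fun _ => 0) b = sing (F.gnd.filter fun v => F.vIdx v = b) := by
  simp [partAt]

lemma isAddress_singleton {b : ℕ} (hb : 1 ≤ b) (hba : b ≤ a 1) :
    IsAddress 1 0 a ({b}, fun _ => 0) := by
  refine ⟨by simp, by simpa using ⟨hb, hba⟩, fun L _ h2 h3 => by omega, fun _ _ => rfl⟩

/-- If all classes have size at least three quarters of the average, one can select `m` vertices from each. -/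
lemma IsLabeled.exists_uniform_subset (hP : P.IsLabeled k a) {lam : ℝ} (hlam : lam ≤ 1 / 4)
    (hcl : ∀ v ∈ P.gnd, |((P.vClass v).card : ℝ) - (P.gnd.card : ℝ) / (a 1 : ℝ)|
      ≤ lam * (P.gnd.card : ℝ) / (a 1 : ℝ)) {m : ℕ} (hm : m * (4 * a 1) ≤ 3 * P.gnd.card) :
    ∃ U ⊆ P.gnd, ∀ b, 1 ≤ b → b ≤ a 1 → (U.filter fun v => P.vIdx v = b).card = m := by
  have hex : ∀ b : ℕ, ∃ S ⊆ P.gnd.filter (fun v => P.vIdx v = b),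
      1 ≤ b → b ≤ a 1 → S.card = m := by
    intro b
    by_cases hb : 1 ≤ b ∧ b ≤ a 1
    · obtain ⟨v, hv, rfl⟩ := hP.exists_vIdx_eq hb.1 hb.2
      have ha1 : (0 : ℝ) < a 1 := by exact_mod_cast (show 0 < a 1 by omega)
      have h1 := (abs_le.1 (hcl v hv)).1
      rw [hP.vClass_eq hv] at h1
      have h2 : (m : ℝ) * (4 * a 1) ≤ 3 * P.gnd.card := by exact_mod_cast hm
      have h3 : (m : ℝ) ≤ 3 / 4 * ((P.gnd.card : ℝ) / a 1) := by
        rw [mul_div_assoc', le_div_iff₀ ha1]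
        linarith
      have h4 : lam * (P.gnd.card : ℝ) / a 1 ≤ 1 / 4 * ((P.gnd.card : ℝ) / a 1) := by
        rw [mul_div_assoc]
        exact mul_le_mul_of_nonneg_right hlam (by positivity)
      have h5 : m ≤ (P.gnd.filter fun u => P.vIdx u = P.vIdx v).card := by
        have : (m : ℝ) ≤ (P.gnd.filter fun u => P.vIdx u = P.vIdx v).card := by linarith
        exact_mod_cast this
      obtain ⟨S, hS, hSc⟩ := Finset.exists_subset_card_eq h5
      exact ⟨S, hS, fun _ _ => hSc⟩
    · exact ⟨∅, Finset.empty_subset _, fun h1 h2 => absurd ⟨h1, h2⟩ hb⟩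
  choose S hS hSc using hex
  refine ⟨(Finset.Icc 1 (a 1)).biUnion S, ?_, ?_⟩
  · intro v hv
    obtain ⟨b, -, hb⟩ := Finset.mem_biUnion.1 hv
    exact (Finset.mem_filter.1 (hS b hb)).1
  · intro b hb hba
    rw [← hSc b hb hba]
    congr 1
    ext v
    simp only [Finset.mem_filter, Finset.mem_biUnion, Finset.mem_Icc]
    constructor
    · rintro ⟨⟨c, -, hc⟩, hvb⟩
      rwa [← hvb, (Finset.mem_filter.1 (hS c hc)).2]
    · intro hv
      exact ⟨⟨b, ⟨hb, hba⟩, hv⟩, (Finset.mem_filter.1 (hS b hv)).2⟩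

/-- Regularity with respect to a polyad with many cliques survives a small perturbation. -/
lemma regPairC_of_close (hP : P.IsLabeled k a) (hQ : Q.IsLabeled k a) (hPW : P.gnd = W)
    (hQW : Q.gnd = W) {ν δ ε d c : ℝ} (hν : 0 ≤ ν) {j : ℕ} (hj : 1 ≤ j) {x : Addr}
    (hx : IsAddress (j + 1) j a x)
    (hPQ : ∀ (y : Addr) (b : ℕ), IsAddress j (j - 1) a y → 1 ≤ b → b ≤ a j →
      ((sd (P.partAt j y b) (Q.partAt j y b)).card : ℝ) ≤ ν * (W.card.choose j : ℝ))
    {A A' : Finset (Finset V)}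
    (hAA : ((sd A A').card : ℝ) ≤ ν * (W.card.choose (j + 1) : ℝ))
    (hN : c * (W.card : ℝ) ^ (j + 1) ≤
      ((KsetC W (P.toPartFam.cross (j + 1)) j (j + 1) (P.polyAt j x)).card : ℝ))
    (hε : 0 ≤ ε) (hε3 : ε ≤ 3) (hδ : 0 ≤ δ) (hδ1 : δ ≤ 1) (hd : 0 ≤ d) (hd1 : d ≤ 1)
    (h1 : 5 * (j + 1) * ν ≤ δ * c) (h2 : (5 * (j + 1) + 1) * ν ≤ δ * (ε * c))
    (hr : RegPairC W (P.toPartFam.cross (j + 1)) j ε d A (P.polyAt j x)) :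
    RegPairC W (Q.toPartFam.cross (j + 1)) j (ε + δ) d A' (Q.polyAt j x) := by
  obtain ⟨D, hD, hDpoly, hDcr⟩ := exists_exceptional hP hQ hPW hQW hν hj hx hPQ
  have hn : (0 : ℝ) ≤ (W.card : ℝ) ^ (j + 1) := by positivity
  refine RegPairC.perturb (e := (j + 1) * (ν * (W.card : ℝ) ^ (j + 1)))
    (f := ν * (W.card : ℝ) ^ (j + 1)) hj ?_ ?_ hr hDpoly hDcr ?_ ?_ hε hε3 hδ hδ1 hd hd1 ?_ ?_
  · rw [← hPW]
    exact P.cross_subset_card _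
  · rw [← hQW]
    exact Q.cross_subset_card _
  · calc (D.card : ℝ) * W.card ≤ (j + 1) * (ν * (W.card : ℝ) ^ j) * W.card :=
        mul_le_mul_of_nonneg_right hD (Nat.cast_nonneg _)
      _ = _ := by ring
  · refine hAA.trans (mul_le_mul_of_nonneg_left ?_ hν)
    exact_mod_cast Nat.choose_le_pow _ _
  · calc 5 * ((j + 1) * (ν * (W.card : ℝ) ^ (j + 1)))
        = 5 * (j + 1) * ν * (W.card : ℝ) ^ (j + 1) := by ring
      _ ≤ δ * c * (W.card : ℝ) ^ (j + 1) := mul_le_mul_of_nonneg_right h1 hn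
      _ = δ * (c * (W.card : ℝ) ^ (j + 1)) := by ring
      _ ≤ _ := mul_le_mul_of_nonneg_left hN hδ
  · calc 5 * ((j + 1) * (ν * (W.card : ℝ) ^ (j + 1))) + ν * (W.card : ℝ) ^ (j + 1)
        = (5 * (j + 1) + 1) * ν * (W.card : ℝ) ^ (j + 1) := by ring
      _ ≤ δ * (ε * c) * (W.card : ℝ) ^ (j + 1) := mul_le_mul_of_nonneg_right h2 hn
      _ = δ * (ε * (c * (W.card : ℝ) ^ (j + 1))) := by ring
      _ ≤ _ := mul_le_mul_of_nonneg_left (mul_le_mul_of_nonneg_left hN hε) hδ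

/-- The vertex classes of a small perturbation have almost the same sizes. -/
lemma class_card_of_close (hP : P.IsLabeled k a) (hQ : Q.IsLabeled k a) (hPW : P.gnd = W)
    (hQW : Q.gnd = W) {ν δ lam : ℝ}
    (hcl : ∀ v ∈ P.gnd, |((P.vClass v).card : ℝ) - (P.gnd.card : ℝ) / (a 1 : ℝ)|
      ≤ lam * (P.gnd.card : ℝ) / (a 1 : ℝ))
    (hPQ : ∀ (y : Addr) (b : ℕ), IsAddress 1 0 a y → 1 ≤ b → b ≤ a 1 →
      ((sd (P.partAt 1 y b) (Q.partAt 1 y b)).card : ℝ) ≤ ν * (W.card : ℝ))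
    (hδ : ν * a 1 ≤ δ) :
    ∀ v ∈ Q.gnd, |((Q.vClass v).card : ℝ) - (Q.gnd.card : ℝ) / (a 1 : ℝ)|
      ≤ (lam + δ) * (Q.gnd.card : ℝ) / (a 1 : ℝ) := by
  intro v hv
  obtain ⟨hb, hba⟩ := hQ.2.1 v hv
  obtain ⟨u, hu, huv⟩ := hP.exists_vIdx_eq hb hba
  have ha1 : (0 : ℝ) < a 1 := by exact_mod_cast (show 0 < a 1 by omega)
  have hu1 := hcl u hu
  rw [hP.vClass_eq hu, huv, hPW] at hu1
  rw [hQ.vClass_eq hv, hQW]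
  rw [hQW] at hv
  have hsd := hPQ _ _ (isAddress_singleton hb hba) hb hba
  rw [partAt_one, partAt_one, hPW, hQW] at hsd
  have hsing : ∀ U : Finset V, (sing U).card = U.card := fun U =>
    Finset.card_image_of_injective _ fun _ _ h => Finset.singleton_injective h
  set A := W.filter fun w => P.vIdx w = Q.vIdx v with hA
  set B := W.filter fun w => Q.vIdx w = Q.vIdx v with hB
  have hAB : (A.card : ℝ) ≤ B.card + (sd (sing A) (sing B)).card := by
    rw [← hsing A, ← hsing B]
    have : sing A ⊆ sing B ∪ sd (sing A) (sing B) := by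
      intro S hS
      by_cases h : S ∈ sing B <;> simp [sd, hS, h]
    exact_mod_cast (Finset.card_le_card this).trans (Finset.card_union_le _ _)
  have hBA : (B.card : ℝ) ≤ A.card + (sd (sing A) (sing B)).card := by
    rw [← hsing A, ← hsing B]
    have : sing B ⊆ sing A ∪ sd (sing A) (sing B) := by
      intro S hS
      by_cases h : S ∈ sing A <;> simp [sd, hS, h]
    exact_mod_cast (Finset.card_le_card this).trans (Finset.card_union_le _ _)
  have hνn : ν * (W.card : ℝ) ≤ δ * W.card / a 1 := by
    rw [le_div_iff₀ ha1]
    calc ν * W.card * a 1 = ν * a 1 * W.card := by ring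
      _ ≤ δ * W.card := mul_le_mul_of_nonneg_right hδ (Nat.cast_nonneg _)
  rw [add_mul, add_div]
  rw [abs_le] at hu1 ⊢
  constructor <;> linarith [hu1.1, hu1.2]

end LabFam

lemma rpow_sixth_bound {ν θ : ℝ} (hν : 0 < ν) (hθ : 0 < θ) (hθ1 : θ ≤ 1) (h : ν ≤ θ ^ 2) :
    ν ^ ((1 : ℝ) / 6) ≤ 1 ∧ ν ≤ ν ^ ((1 : ℝ) / 6) * θ := by
  have hν1 : ν ≤ 1 := h.trans (pow_le_one₀ hθ.le hθ1)
  refine ⟨Real.rpow_le_one hν.le hν1 (by norm_num), ?_⟩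
  have h1 : ν = ν ^ ((1 : ℝ) / 6) * ν ^ ((5 : ℝ) / 6) := by
    rw [← Real.rpow_add hν]
    norm_num
  have h2 : ν ^ ((5 : ℝ) / 6) ≤ ν ^ ((1 : ℝ) / 2) :=
    Real.rpow_le_rpow_of_exponent_ge hν hν1 (by norm_num)
  have h3 : ν ^ ((1 : ℝ) / 2) ≤ θ := by
    rw [← Real.sqrt_eq_rpow]
    exact (Real.sqrt_le_sqrt h).trans_eq (Real.sqrt_sq hθ.le)
  calc ν = ν ^ ((1 : ℝ) / 6) * ν ^ ((5 : ℝ) / 6) := h1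
    _ ≤ _ := mul_le_mul_of_nonneg_left (h2.trans h3) (by positivity)

lemma pow_div_bound {n m t T p k : ℕ} (ht : 1 ≤ t) (htT : t ≤ T) (hn : n ≤ 2 * t * m)
    (hpk : p ≤ k) :
    1 / ((2 * (T : ℝ)) ^ k * (2 * (T : ℝ) ^ (2 ^ k))) * (n : ℝ) ^ p ≤
      (m : ℝ) ^ p / (2 * (t : ℝ) ^ (2 ^ p)) := by
  have ht0 : (1 : ℝ) ≤ t := by exact_mod_cast ht
  have htT' : (t : ℝ) ≤ T := by exact_mod_cast htT
  have hT0 : (1 : ℝ) ≤ T := ht0.trans htT'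
  have hn' : (n : ℝ) ≤ 2 * T * m := by
    have : (n : ℝ) ≤ 2 * t * m := by exact_mod_cast hn
    nlinarith [(Nat.cast_nonneg m : (0 : ℝ) ≤ m)]
  rw [one_div_mul_eq_div, div_le_div_iff₀ (by positivity) (by positivity)]
  have h1 : (n : ℝ) ^ p ≤ (2 * T) ^ k * (m : ℝ) ^ p := by
    calc (n : ℝ) ^ p ≤ (2 * T * m) ^ p := pow_le_pow_left₀ (by positivity) hn' _
      _ = (2 * T) ^ p * (m : ℝ) ^ p := mul_pow _ _ _
      _ ≤ _ := mul_le_mul_of_nonneg_right (pow_le_pow_right₀ (by linarith) hpk)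
        (by positivity)
  have h2 : (t : ℝ) ^ (2 ^ p) ≤ (T : ℝ) ^ (2 ^ k) :=
    (pow_le_pow_left₀ (by linarith) htT' _).trans
      (pow_le_pow_right₀ hT0 (Nat.pow_le_pow_right (by norm_num) hpk))
  calc (n : ℝ) ^ p * (2 * (t : ℝ) ^ (2 ^ p))
      ≤ ((2 * T) ^ k * (m : ℝ) ^ p) * (2 * (T : ℝ) ^ (2 ^ k)) := by gcongr
    _ = _ := by ring

end Perturbation

end HypReg

namespace HypReg

open Finset

/-- Persistence of equitable partitions under small perturbations of the partition and of
the hypergraph (Lemma 4.4 of the paper). -/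
theorem perturbed_partition_regularity (eRI : ℕ → ℕ → ℝ) (hERI : GoodERI eRI) :
    ∀ k : ℕ, 2 ≤ k → ∀ ε : ℝ, 0 < ε →
    ∃ ν₀ : ℝ, 0 < ν₀ ∧ ∀ ν : ℝ, 0 < ν → ν ≤ ν₀ →
    ∃ n₀ : ℕ, ∀ (V : Type) [DecidableEq V], ∀ (W : Finset V) (n : ℕ),
    W.card = n → n₀ ≤ n →
    ∀ lam : ℝ, 0 ≤ lam → lam ≤ 1/4 →
    ∀ (a : ℕ → ℕ) (d : Addr → ℝ), RegInstance eRI k (ε / 3) a d →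
    ∀ Gk Hk : Finset (Finset V), IsKGraph W k Gk → IsKGraph W k Hk →
    ((sd Gk Hk).card : ℝ) ≤ ν * (n.choose k : ℝ) →
    ∀ P Q : LabFam V, P.gnd = W → Q.gnd = W →
    P.IsLabeled k a →
    P.toPartFam.IsEquitable k a (1 / (a 1 : ℝ)) ε lam →
    P.IsDensPartition k a ε d Hk →
    Q.IsLabeled k a →
    (∀ j, 1 ≤ j → j ≤ k - 1 → ∀ (x : Addr) (b : ℕ),
      IsAddress j (j-1) a x → 1 ≤ b → b ≤ a j →
      ((sd (P.partAt j x b) (Q.partAt j x b)).card : ℝ) ≤ ν * (n.choose j : ℝ)) →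
    Q.toPartFam.IsEquitable k a (1 / (a 1 : ℝ)) (ε + ν ^ ((1:ℝ)/6)) (lam + ν ^ ((1:ℝ)/6)) ∧
    Q.IsDensPartition k a (ε + ν ^ ((1:ℝ)/6)) d Gk := by
  intro k hk ε hε
  obtain ⟨T, M, eCL, mCL, hT, hCP, hbounds⟩ := hERI.exists_bounds (k := k) hε
  have hT0 : (0 : ℝ) < T := by exact_mod_cast (show 0 < T by omega)
  set c : ℝ := 1 / ((2 * (T : ℝ)) ^ k * (2 * (T : ℝ) ^ (2 ^ k))) with hc
  have hc0 : 0 < c := by positivity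
  set θ : ℝ := min (1 / T) (min (c / (5 * k + 1)) (ε * c / (5 * k + 1))) with hθ
  have hθ0 : 0 < θ := by positivity
  have hθT : θ * T ≤ 1 := (le_div_iff₀ hT0).1 (min_le_left _ _)
  have hθ1 : θ ≤ 1 := (min_le_left _ _).trans
    ((div_le_one hT0).2 (by exact_mod_cast (show 1 ≤ T by omega)))
  have hθc : θ * (5 * k + 1) ≤ c := (le_div_iff₀ (by positivity)).1
    ((min_le_right _ _).trans (min_le_left _ _))
  have hθεc : θ * (5 * k + 1) ≤ ε * c := (le_div_iff₀ (by positivity)).1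
    ((min_le_right _ _).trans (min_le_right _ _))
  refine ⟨θ ^ 2, by positivity, fun ν hν hν0 => ⟨4 * T * (M + 2), ?_⟩⟩
  obtain ⟨hδ1, hνδ⟩ := rpow_sixth_bound hν hθ0 hθ1 hν0
  set δ : ℝ := ν ^ ((1 : ℝ) / 6) with hδ
  have hδ0 : 0 < δ := Real.rpow_pos_of_pos hν _
  intro V _ W n hWn hn lam hlam0 hlam a d hRI Gk Hk hGk hHk hGH P Q hPW hQW hP hPE hPD hQ hPQ
  obtain ⟨-, ha, -, hεRI, hd⟩ := hRI
  obtain ⟨-, hcl, hR⟩ := hPE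
  have hat : ∀ i, 1 ≤ i → i ≤ k - 1 → a i ≤ maxA k a := fun i h1 h2 =>
    Finset.le_sup (Finset.mem_Icc.2 ⟨h1, h2⟩)
  have ha1 : k ≤ a 1 := hP.1.2.2.2.2.1
  set t := maxA k a with ht
  have hat1 : a 1 ≤ t := hat 1 le_rfl (by omega)
  obtain ⟨htT, hCL⟩ := hbounds t (by omega) hεRI
  have hε3 : ε ≤ 3 := by
    have := (hERI.1 t k (by omega) hk).2
    linarith
  set m := 3 * n / (4 * a 1) with hm
  have hm1 : m * (4 * a 1) ≤ 3 * n := Nat.div_mul_le_self _ _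
  have hm2 : 3 * n < (m + 1) * (4 * a 1) := by
    rw [add_mul, one_mul]
    exact Nat.lt_div_mul_add (by omega)
  have haT : a 1 ≤ T := hat1.trans htT
  have hMm : M + 1 ≤ m := by
    by_contra h
    have h1 : (m + 1) * (4 * a 1) ≤ (M + 2) * (4 * T) := Nat.mul_le_mul (by omega) (by omega)
    nlinarith
  have hnm : n ≤ 2 * t * m := by
    have h1 : 4 * a 1 ≤ n := by nlinarith
    have h2 : 2 * a 1 * m ≤ 2 * t * m := Nat.mul_le_mul_right _ (by omega)
    nlinarith
  subst hWn
  obtain ⟨U, hU, hUm⟩ := hP.exists_uniform_subset hlam hcl (m := m) (by rw [hPW]; exact hm1)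
  have hcard := hP.card_cliques_ge hε hR (t := t) (m := m) (by omega)
    (fun i h1 h2 => ⟨ha i h1 h2, hat i h1 h2⟩) (by omega) (by rw [hPW]; exact hnm) hCP
    (fun l h3 hl => ((hCL l h3 hl).1).trans (by omega)) (fun l h3 hl => (hCL l h3 hl).2) hU hUm
  have hN : ∀ j, 1 ≤ j → j + 1 ≤ k → ∀ x : Addr, IsAddress (j + 1) j a x →
      c * (W.card : ℝ) ^ (j + 1) ≤
        ((KsetC W (P.toPartFam.cross (j + 1)) j (j + 1) (P.polyAt j x)).card : ℝ) := by
    intro j hj hjk x hx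
    refine (pow_div_bound (by omega) htT hnm hjk).trans ((hcard j hj hjk x hx).trans ?_)
    rw [hPW]
    exact_mod_cast Finset.card_le_card (Finset.filter_subset _ _)
  have hW0 : (0 : ℝ) < W.card := by
    have : 0 < W.card := lt_of_lt_of_le (by positivity) hn
    exact_mod_cast this
  have hsmall : ∀ j : ℕ, j + 1 ≤ k → ∀ c' : ℝ, θ * (5 * k + 1) ≤ c' →
      (5 * (j + 1) + 1) * ν ≤ δ * c' := by
    intro j hjk c' hc'
    have hjk' : (j : ℝ) + 1 ≤ k := by exact_mod_cast hjk
    calc (5 * ((j : ℝ) + 1) + 1) * ν ≤ (5 * k + 1) * (δ * θ) := by gcongr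
      _ = δ * (θ * (5 * k + 1)) := by ring
      _ ≤ _ := mul_le_mul_of_nonneg_left hc' hδ0.le
  have hclose : ∀ j, 1 ≤ j → j + 1 ≤ k → ∀ x : Addr, IsAddress (j + 1) j a x →
      ∀ (A A' : Finset (Finset V)) (d' : ℝ), 0 ≤ d' → d' ≤ 1 →
      ((sd A A').card : ℝ) ≤ ν * (W.card.choose (j + 1) : ℝ) →
      RegPairC W (P.toPartFam.cross (j + 1)) j ε d' A (P.polyAt j x) →
      RegPairC W (Q.toPartFam.cross (j + 1)) j (ε + δ) d' A' (Q.polyAt j x) := by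
    intro j hj hjk x hx A A' d' hd0 hd1 hAA hr
    refine LabFam.regPairC_of_close hP hQ hPW hQW hν.le hj hx (hPQ j hj (by omega)) hAA
      (hN j hj hjk x hx) hε.le hε3 hδ0.le hδ1 hd0 hd1 ?_ (hsmall j hjk _ hθεc) hr
    exact (mul_le_mul_of_nonneg_right (by linarith) hν.le).trans (hsmall j hjk _ hθc)
  have ha1' : (0 : ℝ) < a 1 := by exact_mod_cast (show 0 < a 1 by omega)
  refine ⟨⟨(one_div_mul_cancel ha1'.ne').ge, ?_, ?_⟩, ?_⟩
  · refine LabFam.class_card_of_close hP hQ hPW hQW (ν := ν) hcl ?_ ?_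
    · intro y b hy hb hba
      simpa using hPQ 1 le_rfl (by omega) y b hy hb hba
    · have haT' : (a 1 : ℝ) ≤ T := by exact_mod_cast haT
      calc ν * a 1 ≤ δ * θ * T := by gcongr
        _ = δ * (θ * T) := by ring
        _ ≤ δ := mul_le_of_le_one_right hδ0.le hθT
  · refine hQ.polyadReg_of_partAt fun j hj hjk x hx b hb hba => ?_
    obtain ⟨J, hJ⟩ := Finset.card_pos.1 (Nat.cast_pos.1
      (lt_of_lt_of_le (by positivity) (hN j hj (by omega) x hx)))
    rw [← hPW, hP.mem_cliques_polyAt hj hx.1 hx.2.2.2] at hJ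
    have hr := hP.regPairC_partAt hR hj hjk hJ.1 hb hba
    rw [hJ.2, hPW] at hr
    rw [hQW]
    have haj : (1 : ℝ) ≤ a (j + 1) := by exact_mod_cast ha (j + 1) (by omega) hjk
    exact hclose j hj (by omega) x hx _ _ _ (by positivity) ((div_le_one (by linarith)).2 haj)
      (hPQ (j + 1) (by omega) hjk x b hx hb hba) hr
  · intro x hx
    obtain ⟨j, rfl⟩ : ∃ j, k = j + 1 := ⟨k - 1, by omega⟩
    have hr := hPD x hx
    rw [hPW] at hr
    rw [hQW]
    exact hclose j (by omega) le_rfl x hx _ _ _ (hd x hx).1 (hd x hx).2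
      (by rw [sd_comm]; exact hGH) hr

end HypReg
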